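/- Let G be a generalised Heisenberg group with finite generating set S, let ψ be an automorphism of G, and let ψ̄ be the automorphism induced by ψ on the abelianization G/[G,G]. Then there exists a function d belonging to the set {n ↦ n², n ↦ n, n ↦ ln n, n ↦ 1} such that gr_{ψ,G}^S(n) ≃ n^{k} · d(n), where k = rank(G/[G,G]) − rank(id − ψ̄) (the ranks being torsion-free ranks of finitely generated abelian groups and of the image of the endomorphism id − ψ̄). -/

import Mathlib

/-- Word norm with respect to a finite generating set (inverses of generators allowed). -/
noncomputable def wordNorm {G : Type*} [Group G] (S : Finset G) (g : G) : ℕ :=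
  sInf {n | ∃ l : List G, l.length = n ∧ (∀ x ∈ l, x ∈ S ∨ x⁻¹ ∈ S) ∧ l.prod = g}

/-- `x` and `y` are `ψ`-twisted conjugate. -/
def TwistedConj {G : Type*} [Group G] (ψ : G ≃* G) (x y : G) : Prop :=
  ∃ g : G, g * x * (ψ g)⁻¹ = y

/-- The twisted conjugacy growth function: number of `ψ`-twisted conjugacy classes
with a representative of word norm at most `n`. -/
noncomputable def twistedGrowth {G : Type*} [Group G] (ψ : G ≃* G) (S : Finset G) (n : ℕ) : ℕ :=
  Set.ncard ((fun x => {y | TwistedConj ψ x y}) '' {g : G | wordNorm S g ≤ n})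

def GrowthLE (f g : ℕ → ℝ) : Prop :=
  ∃ c : ℕ, 0 < c ∧ ∀ n : ℕ, max 1 (f n) ≤ c * max 1 (g (c * n))

def GrowthEquiv (f g : ℕ → ℝ) : Prop := GrowthLE f g ∧ GrowthLE g f

section
/-- membership in the word ball of radius `n` -/
def InB {G : Type*} [Group G] (S : Finset G) (n : ℕ) (g : G) : Prop :=
  ∃ l : List G, l.length ≤ n ∧ (∀ x ∈ l, x ∈ S ∨ x⁻¹ ∈ S) ∧ l.prod = g

namespace InB
variable {G : Type*} [Group G] {S : Finset G}

lemma one (n : ℕ) : InB S n (1 : G) := ⟨[], by simp, by simp, by simp⟩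

lemma mono {n m : ℕ} {g : G} (h : InB S n g) (hnm : n ≤ m) : InB S m g := by
  obtain ⟨l, h1, h2, h3⟩ := h
  exact ⟨l, h1.trans hnm, h2, h3⟩

lemma mul {n m : ℕ} {g h : G} (hg : InB S n g) (hh : InB S m h) : InB S (n + m) (g * h) := by
  obtain ⟨l, h1, h2, h3⟩ := hg
  obtain ⟨l', h1', h2', h3'⟩ := hh
  refine ⟨l ++ l', by simp; omega, ?_, by simp [h3, h3']⟩
  intro x hx
  rcases List.mem_append.1 hx with h | h
  · exact h2 x h
  · exact h2' x h

lemma inv {n : ℕ} {g : G} (hg : InB S n g) : InB S n g⁻¹ := by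
  obtain ⟨l, h1, h2, h3⟩ := hg
  refine ⟨(l.map (·⁻¹)).reverse, by simpa using h1, ?_, by rw [← h3, List.prod_inv_reverse]⟩
  intro x hx
  simp only [List.mem_reverse, List.mem_map] at hx
  obtain ⟨y, hy, rfl⟩ := hx
  rcases h2 y hy with h | h
  · right; simpa using h
  · left; exact h

lemma npow {n : ℕ} {g : G} (hg : InB S n g) (i : ℕ) : InB S (n * i) (g ^ i) := by
  induction i with
  | zero => simpa using one (S := S) _
  | succ i ih => rw [pow_succ, Nat.mul_succ]; exact ih.mul hg

lemma zpow {n : ℕ} {g : G} (hg : InB S n g) (i : ℤ) : InB S (n * i.natAbs) (g ^ i) := by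
  obtain ⟨k, rfl | rfl⟩ := i.eq_nat_or_neg
  · simpa using hg.npow k
  · simpa using (hg.npow k).inv

lemma gen {g : G} (hg : g ∈ S) : InB S 1 g := ⟨[g], by simp, by simp [hg], by simp⟩

lemma ex (hgen : Subgroup.closure (S : Set G) = ⊤) (g : G) : ∃ n, InB S n g := by
  have : g ∈ Subgroup.closure (S : Set G) := by rw [hgen]; trivial
  induction this using Subgroup.closure_induction with
  | mem x hx => exact ⟨1, gen hx⟩
  | one => exact ⟨0, one 0⟩
  | mul x y _ _ hx hy =>
    obtain ⟨n, hn⟩ := hx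
    obtain ⟨m, hm⟩ := hy
    exact ⟨_, hn.mul hm⟩
  | inv x _ hx =>
    obtain ⟨n, hn⟩ := hx
    exact ⟨_, hn.inv⟩

/-- induction principle on balls -/
lemma ind {P : ℕ → G → Prop} (h0 : ∀ n, P n 1)
    (hs : ∀ n g x, InB S n g → P n g → (x ∈ S ∨ x⁻¹ ∈ S) → P (n + 1) (g * x))
    {n : ℕ} {g : G} (h : InB S n g) : P n g := by
  obtain ⟨l, h1, h2, h3⟩ := h
  induction l using List.reverseRecOn generalizing n g with
  | nil => simp at h3; subst h3; exact h0 n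
  | append_singleton l x ih =>
    simp at h1 h3
    obtain ⟨m, rfl⟩ : ∃ m, n = m + 1 := ⟨n - 1, by omega⟩
    rw [← h3]
    have hl : ∀ y ∈ l, y ∈ S ∨ y⁻¹ ∈ S := fun y hy => h2 y (by simp [hy])
    refine hs _ _ _ ⟨l, by omega, hl, rfl⟩ (ih (by omega) hl rfl) (h2 x (by simp))

open Pointwise in
lemma finite (n : ℕ) : {g : G | InB S n g}.Finite := by
  classical
  induction n with
  | zero =>
    refine (Set.finite_singleton (1 : G)).subset ?_
    rintro g ⟨l, h1, h2, h3⟩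
    have : l = [] := by simpa using h1
    subst this
    simpa using h3.symm
  | succ n ih =>
    have hf : ((S : Set G) ∪ (S : Set G)⁻¹).Finite :=
      S.finite_toSet.union (S.finite_toSet.inv)
    refine ((Set.finite_singleton (1 : G)).union (ih.mul hf)).subset ?_
    intro g hg
    refine ind (S := S) (P := fun k g => k = n + 1 → g ∈ ({1} : Set G) ∪ ({g : G | InB S n g} * ((S : Set G) ∪ (S : Set G)⁻¹)))
      ?_ ?_ hg rfl
    · intro _ _; left; rfl
    · intro m g x hgm _ hx hm
      right
      obtain rfl : m = n := by omega
      exact Set.mul_mem_mul hgm (by simpa using hx)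

end InB

lemma wordNorm_le_iff {G : Type*} [Group G] {S : Finset G}
    (hgen : Subgroup.closure (S : Set G) = ⊤) (n : ℕ) (g : G) :
    wordNorm S g ≤ n ↔ InB S n g := by
  have hne : {n | ∃ l : List G, l.length = n ∧ (∀ x ∈ l, x ∈ S ∨ x⁻¹ ∈ S) ∧ l.prod = g}.Nonempty := by
    obtain ⟨m, l, h1, h2, h3⟩ := InB.ex hgen g
    exact ⟨_, l, rfl, h2, h3⟩
  constructor
  · intro h
    obtain ⟨l, h1, h2, h3⟩ := Nat.sInf_mem hne
    exact ⟨l, by rw [h1]; exact h, h2, h3⟩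
  · rintro ⟨l, h1, h2, h3⟩
    exact (Nat.sInf_le (s := {n | ∃ l : List G, l.length = n ∧ (∀ x ∈ l, x ∈ S ∨ x⁻¹ ∈ S) ∧ l.prod = g})
      ⟨l, rfl, h2, h3⟩).trans h1

/-- a uniform constant on a finite index type -/
lemma exists_unif {ι : Type*} [Finite ι] {P : ι → ℕ → Prop}
    (hP : ∀ i n m, n ≤ m → P i n → P i m) (h : ∀ i, ∃ n, P i n) : ∃ n, ∀ i, P i n := by
  classical
  have := Fintype.ofFinite ι
  choose f hf using h
  exact ⟨∑ i, f i, fun i => hP _ _ _ (Finset.single_le_sum (f := f) (fun _ _ => Nat.zero_le _) (Finset.mem_univ i)) (hf i)⟩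

section
variable {G : Type*} [Group G] {S : Finset G}

/-- endomorphisms are Lipschitz -/
lemma hom_lip (hgen : Subgroup.closure (S : Set G) = ⊤) (f : G →* G) :
    ∃ C : ℕ, ∀ n g, InB S n g → InB S (C * n) (f g) := by
  obtain ⟨C, hC⟩ := exists_unif (ι := S) (P := fun i n => InB S n (f i))
    (fun i n m h h' => h'.mono h) (fun i => InB.ex hgen _)
  refine ⟨C, fun n g hg => ?_⟩
  refine InB.ind (S := S) (P := fun n g => InB S (C * n) (f g)) ?_ ?_ hg
  · intro n; simpa using InB.one _
  · intro n g x _ ih hx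
    rw [map_mul, Nat.mul_succ]
    refine ih.mul ?_
    rcases hx with hx | hx
    · exact hC ⟨x, hx⟩
    · have := (hC ⟨_, hx⟩).inv
      simpa using this

/-- additive maps to `ℤ` are Lipschitz -/
lemma add_lip (f : G → ℤ) (hf : ∀ g h, f (g * h) = f g + f h) :
    ∃ C : ℕ, ∀ n g, InB S n g → |f g| ≤ C * n := by
  have h1 : f 1 = 0 := by simpa using hf 1 1
  have hinv : ∀ g, f g⁻¹ = - f g := by
    intro g; have := hf g g⁻¹; rw [mul_inv_cancel, h1] at this; linarith
  obtain ⟨C, hC⟩ := exists_unif (ι := S) (P := fun i n => |f i| ≤ n)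
    (fun i n m h h' => h'.trans (by exact_mod_cast h)) (fun i => ⟨(f i).natAbs, by simp⟩)
  refine ⟨C, fun n g hg => ?_⟩
  refine InB.ind (S := S) (P := fun n g => |f g| ≤ C * n) ?_ ?_ hg
  · intro n; rw [h1]; simp; positivity
  · intro n g x _ ih hx
    rw [hf]
    have : |f x| ≤ C := by
      rcases hx with hx | hx
      · exact hC ⟨x, hx⟩
      · have := hC ⟨_, hx⟩; simpa [hinv] using this
    calc |f g + f x| ≤ |f g| + |f x| := abs_add_le _ _
      _ ≤ C * n + C := by linarith
      _ = _ := by push_cast; ring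

/-- product of powers -/
lemma prod_lift (hgen : Subgroup.closure (S : Set G) = ⊤) {A : Type*} [AddCommGroup A] (π : G → A)
    (hπ : ∀ g h, π (g * h) = π g + π h) {ι : Type*} [Fintype ι] (y : ι → G) :
    ∃ C : ℕ, ∀ (n : ℕ) (q : ι → ℤ), (∀ i, |q i| ≤ n) → ∃ w, InB S (C * n) w ∧
      π w = ∑ i, q i • π (y i) := by
  classical
  have h1 : π 1 = 0 := by simpa using hπ 1 1
  let πh : G →* Multiplicative A := ⟨⟨fun g => Multiplicative.ofAdd (π g), by rw [h1]; rfl⟩,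
    fun g h => by simp only [hπ]; rfl⟩
  have hz : ∀ g (i : ℤ), π (g ^ i) = i • π g := fun g i => by
    have := map_zpow πh g i
    exact this
  suffices H : ∀ s : Finset ι, ∃ C : ℕ, ∀ (n : ℕ) (q : ι → ℤ), (∀ i, |q i| ≤ n) →
      ∃ w, InB S (C * n) w ∧ π w = ∑ i ∈ s, q i • π (y i) from H Finset.univ
  intro s
  induction s using Finset.induction_on with
  | empty => exact ⟨0, fun n q _ => ⟨1, InB.one _, by simp [h1]⟩⟩
  | insert a s ha ih =>
    obtain ⟨C, hC⟩ := ih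
    obtain ⟨D, hD⟩ := InB.ex hgen (y a)
    refine ⟨D + C, fun n q hq => ?_⟩
    obtain ⟨w, hw1, hw2⟩ := hC n q hq
    refine ⟨y a ^ q a * w, ?_, ?_⟩
    · rw [add_mul]
      refine ((hD.zpow (q a)).mono ?_).mul hw1
      have := hq a
      rw [Int.abs_eq_natAbs] at this
      exact Nat.mul_le_mul_left _ (by exact_mod_cast this)
    · rw [hπ, hz, hw2, Finset.sum_insert ha]

end

end

section
/-- integer box -/
noncomputable def box (r n : ℕ) : Finset (Fin r → ℤ) := Fintype.piFinset fun _ => Finset.Icc (-(n : ℤ)) n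

lemma mem_box {r n : ℕ} {s : Fin r → ℤ} : s ∈ box r n ↔ ∀ i, |s i| ≤ n := by
  simp [box, Fintype.mem_piFinset, abs_le]

lemma card_box (r n : ℕ) : (box r n).card = (2 * n + 1) ^ r := by
  rw [box, Fintype.card_piFinset]
  simp
  congr 1
  omega

/-- gcd of a vector -/
def gv {r : ℕ} (w : Fin r → ℤ) : ℕ := Finset.univ.gcd (fun i => (w i).natAbs)

lemma gv_dvd {r : ℕ} (w : Fin r → ℤ) (i : Fin r) : (gv w : ℤ) ∣ w i := by
  rw [Int.natCast_dvd]
  exact Finset.gcd_dvd (Finset.mem_univ i)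

lemma dvd_gv {r : ℕ} {w : Fin r → ℤ} {e : ℕ} (h : ∀ i, (e : ℤ) ∣ w i) : e ∣ gv w :=
  Finset.dvd_gcd fun i _ => by simpa [Int.natCast_dvd] using h i

lemma gv_eq_zero {r : ℕ} {w : Fin r → ℤ} : gv w = 0 ↔ w = 0 := by
  simp [gv, Finset.gcd_eq_zero_iff, funext_iff]

lemma gv_le {r n : ℕ} {w : Fin r → ℤ} (hw : w ∈ box r n) : gv w ≤ n := by
  by_cases h : w = 0
  · rw [gv_eq_zero.2 h]; omega
  · obtain ⟨i, hi⟩ := Function.ne_iff.1 h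
    have h1 := mem_box.1 hw i
    have h2 := Int.le_of_dvd (abs_pos.2 hi) ((dvd_abs _ _).2 (gv_dvd w i))
    omega

/-- weights -/
def Wt {r : ℕ} (c : (Fin r → ℤ) → ℕ) (n : ℕ) (s : Fin r → ℤ) : ℕ :=
  if c s = 0 then n ^ 2 + 1 else c s

noncomputable def Fsum {r : ℕ} (c : (Fin r → ℤ) → ℕ) (n : ℕ) : ℕ := ∑ s ∈ box r n, Wt c n s

lemma sum_gv_le (r R : ℕ) :
    ∑ w ∈ (box r R).filter (· ≠ 0), gv w ≤ ∑ e ∈ Finset.Icc 1 R, e * (2 * (R / e) + 1) ^ r := by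
  have hm : ∀ w ∈ (box r R).filter (· ≠ 0), gv w ∈ Finset.Icc 1 R := by
    intro w hw
    rw [Finset.mem_filter] at hw
    have h1 := gv_le hw.1
    have h2 : gv w ≠ 0 := fun h => hw.2 (gv_eq_zero.1 h)
    simp; omega
  rw [← Finset.sum_fiberwise_of_maps_to hm]
  refine Finset.sum_le_sum fun e he => ?_
  have he1 : 1 ≤ e := (Finset.mem_Icc.1 he).1
  rw [Finset.sum_congr rfl (g := fun _ => e) (fun x hx => (Finset.mem_filter.1 hx).2)]
  rw [Finset.sum_const, smul_eq_mul, mul_comm]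
  refine Nat.mul_le_mul_left _ ?_
  rw [← card_box]
  refine Finset.card_le_card_of_injOn (fun w i => w i / e) ?_ ?_
  · intro w hw
    simp only [Finset.coe_filter, Finset.mem_filter, Set.mem_ofPred_eq] at hw
    obtain ⟨⟨h1, h2⟩, h3⟩ := hw
    refine Finset.mem_coe.2 (mem_box.2 fun i => ?_)
    have h4 := mem_box.1 h1 i
    obtain ⟨q, hq⟩ := gv_dvd w i
    rw [h3] at hq
    have he0 : (e : ℤ) ≠ 0 := by omega
    simp only [hq]
    rw [Int.mul_ediv_cancel_left _ he0]
    rw [hq, abs_mul, Nat.abs_cast] at h4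
    push_cast
    rw [Int.le_ediv_iff_mul_le (by omega)]
    linarith
  · intro w hw w' hw' h
    simp only [Finset.coe_filter, Finset.mem_filter, Set.mem_ofPred_eq] at hw hw'
    funext i
    have := congrFun h i
    simp only at this
    have h1 := gv_dvd w i
    have h2 := gv_dvd w' i
    rw [hw.2] at h1
    rw [hw'.2] at h2
    rw [← Int.mul_ediv_cancel' h1, this, Int.mul_ediv_cancel' h2]

lemma sum_e_one (R : ℕ) : ∑ e ∈ Finset.Icc 1 R, e * (2 * (R / e) + 1) ^ 1 ≤ 3 * R ^ 2 := by
  calc _ ≤ ∑ e ∈ Finset.Icc 1 R, 3 * R := by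
        refine Finset.sum_le_sum fun e he => ?_
        have h1 := Finset.mem_Icc.1 he
        have h2 := Nat.mul_div_le R e
        nlinarith
    _ = _ := by simp; ring

lemma term_le {R e : ℕ} (he : e ∈ Finset.Icc 1 R) :
    (2 * ((R / e : ℕ) : ℝ) + 1) ≤ 3 * R / e := by
  have h1 := Finset.mem_Icc.1 he
  have h2 : (0 : ℝ) < e := by exact_mod_cast h1.1
  have h3 : (e : ℝ) ≤ R := by exact_mod_cast h1.2
  rw [le_div_iff₀ h2]
  have h4 : (((R / e : ℕ) : ℝ)) * e ≤ R := by exact_mod_cast Nat.div_mul_le_self R e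
  nlinarith

lemma sum_e_two (R : ℕ) (hR : 1 ≤ R) :
    ((∑ e ∈ Finset.Icc 1 R, e * (2 * (R / e) + 1) ^ 2 : ℕ) : ℝ) ≤ 9 * R ^ 2 * (1 + Real.log R) := by
  have h0 : (harmonic R : ℝ) ≤ 1 + Real.log R := harmonic_le_one_add_log R
  rw [harmonic_eq_sum_Icc] at h0
  push_cast at h0
  push_cast
  calc _ ≤ ∑ e ∈ Finset.Icc 1 R, 9 * (R : ℝ) ^ 2 * (e : ℝ)⁻¹ := by
        refine Finset.sum_le_sum fun e he => ?_
        have h1 := Finset.mem_Icc.1 he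
        have h2 : (0 : ℝ) < e := by exact_mod_cast h1.1
        have h4 := term_le he
        calc (e : ℝ) * (2 * ((R / e : ℕ) : ℝ) + 1) ^ 2 ≤ e * (3 * R / e) ^ 2 := by gcongr
          _ = _ := by field_simp; ring
    _ = 9 * (R : ℝ) ^ 2 * ∑ e ∈ Finset.Icc 1 R, (e : ℝ)⁻¹ := by rw [Finset.mul_sum]
    _ ≤ _ := by gcongr

lemma sum_inv_sq (R : ℕ) (hR : 2 ≤ R) :
    ∑ e ∈ Finset.Icc 2 R, 1 / (e : ℝ) ^ 2 ≤ 3 / 4 - 1 / (R : ℝ) := by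
  induction R, hR using Nat.le_induction with
  | base => norm_num
  | succ R hR ih =>
    rw [← Finset.insert_Icc_right_eq_Icc_add_one (by omega), Finset.sum_insert (by simp)]
    have h2 : (0 : ℝ) < R := by exact_mod_cast (by omega : 0 < R)
    have : 1 / ((R + 1 : ℕ) : ℝ) ^ 2 ≤ 1 / (R : ℝ) - 1 / ((R + 1 : ℕ) : ℝ) := by
      push_cast
      rw [div_sub_div _ _ (by positivity) (by positivity), div_le_div_iff₀ (by positivity) (by positivity)]
      nlinarith
    linarith

lemma sum_inv_sq' (R : ℕ) : ∑ e ∈ Finset.Icc 2 R, 1 / (e : ℝ) ^ 2 ≤ 3 / 4 := by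
  by_cases h : 2 ≤ R
  · have := sum_inv_sq R h
    have h2 : (0 : ℝ) ≤ 1 / (R : ℝ) := by positivity
    linarith
  · rw [Finset.Icc_eq_empty (by omega)]; norm_num

lemma sum_e_three (r R : ℕ) (hr : 3 ≤ r) :
    ((∑ e ∈ Finset.Icc 1 R, e * (2 * (R / e) + 1) ^ r : ℕ) : ℝ) ≤ 3 ^ r * R ^ r * 2 := by
  have h0 : ∑ e ∈ Finset.Icc 1 R, 1 / (e : ℝ) ^ 2 ≤ 2 := by
    by_cases h : 1 ≤ R
    · rw [← Finset.insert_Icc_add_one_left_eq_Icc h, Finset.sum_insert (by simp)]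
      have := sum_inv_sq' R
      norm_num at this ⊢
      linarith
    · rw [Finset.Icc_eq_empty (by omega)]; norm_num
  push_cast
  calc _ ≤ ∑ e ∈ Finset.Icc 1 R, 3 ^ r * (R : ℝ) ^ r * (1 / (e : ℝ) ^ 2) := by
        refine Finset.sum_le_sum fun e he => ?_
        have h1 := Finset.mem_Icc.1 he
        have h2 : (1 : ℝ) ≤ e := by exact_mod_cast h1.1
        have h4 := term_le he
        calc (e : ℝ) * (2 * ((R / e : ℕ) : ℝ) + 1) ^ r ≤ e * (3 * R / e) ^ r := by gcongr
          _ = 3 ^ r * R ^ r * (e / e ^ r) := by rw [div_pow, mul_pow]; ring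
          _ ≤ _ := by
            gcongr 3 ^ r * (R : ℝ) ^ r * ?_
            rw [div_le_div_iff₀ (by positivity) (by positivity)]
            have : (e : ℝ) ^ 3 ≤ e ^ r := pow_le_pow_right₀ h2 hr
            linarith [show (e : ℝ) * e ^ 2 = e ^ 3 by ring]
    _ = 3 ^ r * (R : ℝ) ^ r * ∑ e ∈ Finset.Icc 1 R, 1 / (e : ℝ) ^ 2 := by rw [Finset.mul_sum]
    _ ≤ _ := by gcongr

/-- the affine gcd function -/
def gaff {r : ℕ} (s0 : Fin r → ℤ) (N : ℕ) (s : Fin r → ℤ) : ℕ := gv (fun i => s0 i + N * s i)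

def kk {r : ℕ} (s0 : Fin r → ℤ) : ℕ := ∑ i, (s0 i).natAbs

lemma kk_le {r : ℕ} (s0 : Fin r → ℤ) (i : Fin r) : |s0 i| ≤ kk s0 := by
  rw [Int.abs_eq_natAbs]
  exact_mod_cast Finset.single_le_sum (f := fun i => (s0 i).natAbs) (fun _ _ => Nat.zero_le _) (Finset.mem_univ i)

lemma aff_mem_box {r : ℕ} (s0 : Fin r → ℤ) (N n : ℕ) (hn : 1 ≤ n) {s : Fin r → ℤ} (hs : s ∈ box r n) :
    (fun i => s0 i + N * s i) ∈ box r ((N + kk s0) * n) := by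
  rw [mem_box] at hs ⊢
  intro i
  have h1 := hs i
  have h2 := kk_le s0 i
  have hn' : (1 : ℤ) ≤ n := by exact_mod_cast hn
  calc |s0 i + N * s i| ≤ |s0 i| + |N * s i| := abs_add_le _ _
    _ = |s0 i| + N * |s i| := by rw [abs_mul, Nat.abs_cast]
    _ ≤ kk s0 * n + N * n := by
        have : (0 : ℤ) ≤ kk s0 := by positivity
        gcongr
        nlinarith
    _ = _ := by push_cast; ring

lemma aff_inj {r : ℕ} (s0 : Fin r → ℤ) (N : ℕ) (hN : 1 ≤ N) :
    Function.Injective (fun (s : Fin r → ℤ) (i : Fin r) => s0 i + N * s i) := by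
  intro s s' h
  funext i
  have := congrFun h i
  have hN' : N ≠ 0 := by omega
  simpa [hN'] using this

lemma gaff_le {r : ℕ} (s0 : Fin r → ℤ) (N n : ℕ) (hn : 1 ≤ n) {s : Fin r → ℤ} (hs : s ∈ box r n) :
    gaff s0 N s ≤ (N + kk s0) * n := gv_le (aff_mem_box s0 N n hn hs)

lemma Fsum_upper {r : ℕ} (s0 : Fin r → ℤ) (N n : ℕ) (hN : 1 ≤ N) (hn : 1 ≤ n) :
    Fsum (gaff s0 N) n ≤ (n ^ 2 + 1) +
      ∑ e ∈ Finset.Icc 1 ((N + kk s0) * n), e * (2 * (((N + kk s0) * n) / e) + 1) ^ r := by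
  classical
  refine le_trans ?_ (Nat.add_le_add_left (sum_gv_le r _) _)
  rw [Fsum, ← Finset.sum_filter_add_sum_filter_not _ (fun s => gaff s0 N s = 0)]
  refine Nat.add_le_add ?_ ?_
  · have : ((box r n).filter (fun s => gaff s0 N s = 0)).card ≤ 1 := by
      rw [Finset.card_le_one]
      intro a ha b hb
      rw [Finset.mem_filter] at ha hb
      exact aff_inj s0 N hN ((gv_eq_zero.1 ha.2).trans (gv_eq_zero.1 hb.2).symm)
    rw [Finset.sum_congr rfl (g := fun _ => n ^ 2 + 1)
      (fun x hx => by simp [Wt, (Finset.mem_filter.1 hx).2])]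
    rw [Finset.sum_const, smul_eq_mul]
    nlinarith
  · rw [Finset.sum_congr rfl (g := fun s => gv ((fun (s : Fin r → ℤ) (i : Fin r) => s0 i + N * s i) s))
      (fun x hx => by simp [Wt, (Finset.mem_filter.1 hx).2]; rfl)]
    rw [← Finset.sum_image (f := gv) (fun a _ b _ h => aff_inj s0 N hN h)]
    refine Finset.sum_le_sum_of_subset ?_
    intro w hw
    obtain ⟨s, hs, rfl⟩ := Finset.mem_image.1 hw
    rw [Finset.mem_filter] at hs ⊢
    exact ⟨aff_mem_box s0 N n hn hs.1, fun h => hs.2 (gv_eq_zero.2 h)⟩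

lemma Wt_pos {r : ℕ} (c : (Fin r → ℤ) → ℕ) (n : ℕ) (s) : 1 ≤ Wt c n s := by
  unfold Wt; split_ifs <;> omega

lemma Fsum_ge {r : ℕ} (c : (Fin r → ℤ) → ℕ) (n : ℕ) : n ^ r ≤ Fsum c n := by
  calc n ^ r ≤ (box r n).card * 1 := by rw [card_box, mul_one]; exact Nat.pow_le_pow_left (by omega) _
    _ ≤ _ := Finset.card_nsmul_le_sum _ _ _ (fun s _ => Wt_pos c n s)

lemma Fsum_one_le {r : ℕ} (n : ℕ) (hn : 1 ≤ n) : Fsum (r := r) (fun _ => 1) n ≤ 3 ^ r * n ^ r := by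
  rw [Fsum, Finset.sum_congr rfl (g := fun _ => 1) (fun x hx => by simp [Wt])]
  rw [Finset.sum_const, card_box, smul_eq_mul, mul_one, ← mul_pow]
  exact Nat.pow_le_pow_left (by omega) _

end

section
lemma Fsum_lower_one (s0 : Fin 1 → ℤ) (N n : ℕ) (hN : 1 ≤ N) (hn : 1 ≤ n) :
    n ^ 2 ≤ 2 * Fsum (gaff s0 N) ((1 + kk s0) * n) := by
  classical
  have h1 : ∑ j ∈ Finset.Icc 1 n, j ≤ Fsum (gaff s0 N) ((1 + kk s0) * n) := by
    let f : ℕ → (Fin 1 → ℤ) := fun j _ => j + kk s0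
    have hf : Function.Injective f := by
      intro a b h
      have := congrFun h 0
      simpa [f] using this
    rw [Fsum]
    calc _ ≤ ∑ j ∈ Finset.Icc 1 n, Wt (gaff s0 N) ((1 + kk s0) * n) (f j) := by
          refine Finset.sum_le_sum fun j hj => ?_
          have hj1 := Finset.mem_Icc.1 hj
          unfold Wt
          split_ifs with h
          · nlinarith [hj1.2, Nat.zero_le (kk s0 * n), sq_nonneg n, Nat.zero_le ((kk s0 * n)^2)]
          · have h2 := gv_dvd (fun i => s0 i + N * f j i) 0
            have h0 : j ≤ s0 0 + N * f j 0 := by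
              have := neg_le_of_abs_le (kk_le s0 0)
              have hN' : (1 : ℤ) ≤ N := by exact_mod_cast hN
              have : (0 : ℤ) ≤ (N - 1) * (j + kk s0) := mul_nonneg (by omega) (by positivity)
              simp only [f]
              linarith
            have h3 : gaff s0 N (f j) = (s0 0 + N * f j 0).natAbs := by
              simp [gaff, gv]
            rw [h3]
            omega
      _ = ∑ s ∈ (Finset.Icc 1 n).image f, Wt (gaff s0 N) ((1 + kk s0) * n) s := by
          rw [Finset.sum_image (fun a _ b _ h => hf h)]
      _ ≤ _ := by
          refine Finset.sum_le_sum_of_subset ?_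
          intro s hs
          obtain ⟨j, hj, rfl⟩ := Finset.mem_image.1 hs
          have hj1 := Finset.mem_Icc.1 hj
          rw [mem_box]
          intro i
          simp only [f]
          rw [abs_of_nonneg (by positivity)]
          have : (1 + kk s0) * n = n + kk s0 * n := by ring
          rw [this]
          have : kk s0 ≤ kk s0 * n := Nat.le_mul_of_pos_right _ hn
          push_cast
          zify at this hj1
          linarith
  have h2 : n ^ 2 ≤ 2 * ∑ j ∈ Finset.Icc 1 n, j := by
    clear h1
    induction n, hn using Nat.le_induction with
    | base => simp
    | succ n hn ih => rw [← Finset.insert_Icc_right_eq_Icc_add_one (by omega), Finset.sum_insert (by simp)]; nlinarith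
  omega

lemma totient_ge (e : ℕ) : (e : ℝ) - ∑ k ∈ e.divisors.filter (2 ≤ ·), (e : ℝ) / k ≤ Nat.totient e := by
  by_cases he : e = 0
  · subst he; simp
  have h1 : ∑ k ∈ e.divisors, Nat.totient (e / k) = e := by
    rw [Nat.sum_div_divisors e Nat.totient, Nat.sum_totient]
  rw [← Finset.sum_filter_add_sum_filter_not _ (2 ≤ ·)] at h1
  have h2 : e.divisors.filter (¬ 2 ≤ ·) = {1} := by
    ext k
    simp only [Finset.mem_filter, Nat.mem_divisors, Finset.mem_singleton]
    constructor
    · rintro ⟨⟨h, _⟩, h'⟩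
      have := Nat.pos_of_dvd_of_pos h (by omega)
      omega
    · rintro rfl; simp [he]
  rw [h2, Finset.sum_singleton, Nat.div_one] at h1
  have h3 : ((∑ k ∈ e.divisors.filter (2 ≤ ·), Nat.totient (e / k) : ℕ) : ℝ) ≤
      ∑ k ∈ e.divisors.filter (2 ≤ ·), (e : ℝ) / k := by
    push_cast
    refine Finset.sum_le_sum fun k hk => ?_
    calc ((Nat.totient (e / k) : ℕ) : ℝ) ≤ ((e / k : ℕ) : ℝ) := by exact_mod_cast Nat.totient_le _
      _ ≤ _ := Nat.cast_div_le
  have h4 : ((∑ k ∈ e.divisors.filter (2 ≤ ·), Nat.totient (e / k) : ℕ) : ℝ) + Nat.totient e = e := by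
    exact_mod_cast h1
  linarith

lemma ap_inner_sum (N m k : ℕ) (hN : 1 ≤ N) (hk : 1 ≤ k) :
    ∑ a ∈ (Finset.range m).filter (fun a => k ∣ 1 + N * a), 1 / ((1 + N * a : ℕ) : ℝ) ≤
      (1 / k) * ∑ b ∈ Finset.range m, 1 / ((1 + N * b : ℕ) : ℝ) := by
  classical
  let b : ℕ → ℕ := fun a => ((1 + N * a) / k - 1) / N
  have hb : Set.InjOn b ((Finset.range m).filter (fun a => k ∣ 1 + N * a) : Finset ℕ) := by
    intro a ha a' ha' h
    simp only [Finset.coe_filter, Set.mem_ofPred_eq] at ha ha'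
    obtain ⟨_, f, hf⟩ := ha
    obtain ⟨_, f', hf'⟩ := ha'
    simp only [b, hf, hf', Nat.mul_div_cancel_left _ (show 0 < k by omega)] at h
    have hf1 : 1 ≤ f := by rcases Nat.eq_zero_or_pos f with h | h; · subst h; omega
                           · exact h
    have hf1' : 1 ≤ f' := by rcases Nat.eq_zero_or_pos f' with h | h; · subst h; omega
                             · exact h
    have hcop : Nat.Coprime N k := by
      have h1 : Nat.gcd N k ∣ k * f := (Nat.gcd_dvd_right N k).mul_right f
      rw [← hf] at h1
      have h2 : Nat.gcd N k ∣ N * a := (Nat.gcd_dvd_left N k).mul_right a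
      exact Nat.dvd_one.1 ((Nat.dvd_add_left h2).1 h1)
    have hmod : f ≡ f' [MOD N] := by
      have : k * f ≡ k * f' [MOD N] := by
        rw [← hf, ← hf']
        have h1 : 1 + N * a ≡ 1 + 0 [MOD N] := Nat.ModEq.add_left _ ((Nat.modEq_zero_iff_dvd).2 (Dvd.intro _ rfl))
        have h2 : 1 + N * a' ≡ 1 + 0 [MOD N] := Nat.ModEq.add_left _ ((Nat.modEq_zero_iff_dvd).2 (Dvd.intro _ rfl))
        exact h1.trans h2.symm
      exact Nat.ModEq.cancel_left_of_coprime hcop this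
    have hmod' : f - 1 ≡ f' - 1 [MOD N] := by
      refine Nat.ModEq.add_right_cancel' 1 ?_
      rwa [Nat.sub_add_cancel hf1, Nat.sub_add_cancel hf1']
    have : f - 1 = f' - 1 := by
      rw [← Nat.div_add_mod (f - 1) N, ← Nat.div_add_mod (f' - 1) N, h, hmod']
    have hff : f = f' := by omega
    rw [hff, ← hf'] at hf
    have : N * a = N * a' := by omega
    exact Nat.eq_of_mul_eq_mul_left (by omega) this
  rw [Finset.mul_sum]
  calc _ ≤ ∑ a ∈ (Finset.range m).filter (fun a => k ∣ 1 + N * a), (1 / (k : ℝ)) * (1 / ((1 + N * b a : ℕ) : ℝ)) := by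
        refine Finset.sum_le_sum fun a ha => ?_
        obtain ⟨ha, f, hf⟩ := Finset.mem_filter.1 ha
        have hf1 : 1 ≤ f := by rcases Nat.eq_zero_or_pos f with h | h; · subst h; omega
                               · exact h
        rw [one_div_mul_one_div]
        refine one_div_le_one_div_of_le (by positivity) ?_
        rw [hf]
        have : 1 + N * b a ≤ f := by
          simp only [b, hf, Nat.mul_div_cancel_left _ (show 0 < k by omega)]
          have := Nat.mul_div_le (f - 1) N
          omega
        exact_mod_cast Nat.mul_le_mul_left k this
    _ = ∑ c ∈ ((Finset.range m).filter (fun a => k ∣ 1 + N * a)).image b, (1 / (k : ℝ)) * (1 / ((1 + N * c : ℕ) : ℝ)) := by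
        rw [Finset.sum_image hb]
    _ ≤ _ := by
        refine Finset.sum_le_sum_of_subset_of_nonneg ?_ (fun _ _ _ => by positivity)
        intro c hc
        obtain ⟨a, ha, rfl⟩ := Finset.mem_image.1 hc
        obtain ⟨ha, _⟩ := Finset.mem_filter.1 ha
        rw [Finset.mem_range] at ha ⊢
        refine lt_of_le_of_lt ?_ ha
        have h1 : (1 + N * a) / k ≤ 1 + N * a := Nat.div_le_self _ _
        calc b a ≤ (1 + N * a - 1) / N := Nat.div_le_div_right (by omega)
          _ = a := by rw [Nat.add_sub_cancel_left, Nat.mul_div_cancel_left _ (by omega)]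

lemma totient_sum (N m : ℕ) (hN : 1 ≤ N) :
    (1 / 4) * ∑ a ∈ Finset.range m, 1 / ((1 + N * a : ℕ) : ℝ) ≤
      ∑ a ∈ Finset.range m, (Nat.totient (1 + N * a) : ℝ) / ((1 + N * a : ℕ) : ℝ) ^ 2 := by
  set H := ∑ a ∈ Finset.range m, 1 / ((1 + N * a : ℕ) : ℝ) with hH
  have hH0 : 0 ≤ H := Finset.sum_nonneg fun _ _ => by positivity
  have h1 : ∀ a ∈ Finset.range m, 1 / ((1 + N * a : ℕ) : ℝ) -
      ∑ k ∈ Finset.Icc 2 (N * m), (if k ∣ 1 + N * a then (1 / (k : ℝ)) * (1 / ((1 + N * a : ℕ) : ℝ)) else 0) ≤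
      (Nat.totient (1 + N * a) : ℝ) / ((1 + N * a : ℕ) : ℝ) ^ 2 := by
    intro a ha
    have ha := Finset.mem_range.1 ha
    have h := totient_ge (1 + N * a)
    have hle : 1 + N * a ≤ N * m := by nlinarith
    have hset : (1 + N * a).divisors.filter (2 ≤ ·) = (Finset.Icc 2 (N * m)).filter (· ∣ 1 + N * a) := by
      ext k
      simp only [Finset.mem_filter, Nat.mem_divisors, Finset.mem_Icc]
      constructor
      · rintro ⟨⟨h, _⟩, h2⟩
        exact ⟨⟨h2, (Nat.le_of_dvd (by omega) h).trans hle⟩, h⟩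
      · rintro ⟨⟨h1, _⟩, h2⟩
        exact ⟨⟨h2, by omega⟩, h1⟩
    rw [hset, Finset.sum_filter] at h
    have hp : (0 : ℝ) < ((1 + N * a : ℕ) : ℝ) := by positivity
    rw [le_div_iff₀ (by positivity)]
    refine le_trans (le_of_eq ?_) h
    rw [sub_mul, Finset.sum_mul]
    congr 1
    · field_simp
    · refine Finset.sum_congr rfl fun k hk => ?_
      split_ifs
      · field_simp
      · simp
  have h2 : ∑ a ∈ Finset.range m, ∑ k ∈ Finset.Icc 2 (N * m),
      (if k ∣ 1 + N * a then (1 / (k : ℝ)) * (1 / ((1 + N * a : ℕ) : ℝ)) else 0) ≤ 3 / 4 * H := by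
    rw [Finset.sum_comm]
    calc _ ≤ ∑ k ∈ Finset.Icc 2 (N * m), (1 / (k : ℝ) ^ 2) * H := by
          refine Finset.sum_le_sum fun k hk => ?_
          have hk1 := (Finset.mem_Icc.1 hk).1
          rw [← Finset.sum_filter, ← Finset.mul_sum]
          calc _ ≤ (1 / (k : ℝ)) * ((1 / k) * H) := by
                gcongr
                exact ap_inner_sum N m k hN (by omega)
            _ = _ := by field_simp
      _ = (∑ k ∈ Finset.Icc 2 (N * m), 1 / (k : ℝ) ^ 2) * H := by rw [Finset.sum_mul]
      _ ≤ _ := by gcongr; exact sum_inv_sq' _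
  have h3 := Finset.sum_le_sum h1
  rw [Finset.sum_sub_distrib] at h3
  linarith

lemma log_sum (N m : ℕ) (hN : 1 ≤ N) :
    Real.log m ≤ N * ∑ a ∈ Finset.range m, 1 / ((1 + N * a : ℕ) : ℝ) := by
  by_cases hm : m = 0
  · subst hm; simp
  have h := log_add_one_le_harmonic m
  rw [harmonic] at h
  push_cast at h
  have h0 : Real.log m ≤ Real.log (m + 1) := Real.log_le_log (by positivity) (by linarith)
  refine h0.trans (h.trans ?_)
  rw [Finset.mul_sum]
  refine Finset.sum_le_sum fun a _ => ?_
  have hN' : (1 : ℝ) ≤ N := by exact_mod_cast hN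
  rw [mul_one_div, inv_eq_one_div, div_le_div_iff₀ (by positivity) (by positivity)]
  push_cast
  nlinarith

lemma Fsum_lower_tot {r : ℕ} (s0 : Fin r → ℤ) (N m : ℕ) (hN : 1 ≤ N) :
    ∑ a ∈ Finset.range m, Nat.totient (1 + N * a) * (N * m / (1 + N * a)) ^ r ≤
      Fsum (gaff s0 N) ((1 + kk s0) * (N * m)) := by
  classical
  set n := N * m with hn
  have hea : ∀ a ∈ Finset.range m, 1 + N * a ≤ n := by
    intro a ha; have := Finset.mem_range.1 ha; nlinarith
  have hW : ∀ s, ∑ a ∈ Finset.range m, (if 1 + N * a ∣ gaff s0 N s then Nat.totient (1 + N * a) else 0)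
      ≤ Wt (gaff s0 N) ((1 + kk s0) * n) s := by
    intro s
    have hinj : Set.InjOn (fun a => 1 + N * a) (Finset.range m : Set ℕ) := by
      intro a _ b _ h
      simp only at h
      exact Nat.eq_of_mul_eq_mul_left (show 0 < N by omega) (by omega)
    unfold Wt
    split_ifs with h
    · calc _ ≤ ∑ a ∈ Finset.range m, n := by
            refine Finset.sum_le_sum fun a ha => ?_
            rw [h]; simp
            exact (Nat.totient_le _).trans (hea a ha)
        _ = m * n := by simp
        _ ≤ n * n := Nat.mul_le_mul_right _ (by rw [hn]; exact Nat.le_mul_of_pos_left _ (by omega))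
        _ ≤ _ := by
          have : n ≤ (1 + kk s0) * n := Nat.le_mul_of_pos_left _ (by omega)
          nlinarith
    · rw [← Finset.sum_filter]
      conv_rhs => rw [← Nat.sum_totient (gaff s0 N s)]
      rw [← Finset.sum_image (f := Nat.totient) (s := (Finset.range m).filter _) (g := fun a => 1 + N * a)
        (hinj.mono (by intro x hx; simp at hx ⊢; exact hx.1))]
      refine Finset.sum_le_sum_of_subset ?_
      intro e he
      obtain ⟨a, ha, rfl⟩ := Finset.mem_image.1 he
      exact Nat.mem_divisors.2 ⟨(Finset.mem_filter.1 ha).2, h⟩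
  calc _ ≤ ∑ a ∈ Finset.range m, ∑ s ∈ box r ((1 + kk s0) * n),
        (if 1 + N * a ∣ gaff s0 N s then Nat.totient (1 + N * a) else 0) := by
        refine Finset.sum_le_sum fun a ha => ?_
        rw [← Finset.sum_filter, Finset.sum_const, smul_eq_mul, mul_comm]
        refine Nat.mul_le_mul_right _ ?_
        have hcard : (Fintype.piFinset (fun _ : Fin r => Finset.Icc (1 : ℤ) ((n / (1 + N * a) : ℕ) : ℤ))).card
            = (n / (1 + N * a)) ^ r := by
          rw [Fintype.card_piFinset]; simp [-Int.natCast_ediv]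
        rw [← hcard]
        refine Finset.card_le_card_of_injOn (fun j i => (1 + N * a : ℕ) * j i + a * s0 i) ?_ ?_
        · intro j hj
          simp only [Finset.mem_coe, Fintype.mem_piFinset, Finset.mem_Icc] at hj
          rw [Finset.mem_coe, Finset.mem_filter, mem_box]
          constructor
          · intro i
            obtain ⟨h1, h2⟩ := hj i
            have h3 := kk_le s0 i
            have h4 : ((1 + N * a : ℕ) : ℤ) * ((n / (1 + N * a) : ℕ) : ℤ) ≤ n := by
              exact_mod_cast Nat.mul_div_le n (1 + N * a)
            have h5 : a ≤ n := by have := hea a ha; nlinarith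
            calc |((1 + N * a : ℕ) : ℤ) * j i + a * s0 i| ≤ |((1 + N * a : ℕ) : ℤ) * j i| + |a * s0 i| := abs_add_le _ _
              _ = ((1 + N * a : ℕ) : ℤ) * j i + a * |s0 i| := by
                  rw [abs_mul, abs_mul, Nat.abs_cast, Nat.abs_cast, abs_of_nonneg (by omega : 0 ≤ j i)]
              _ ≤ ((1 + N * a : ℕ) : ℤ) * ((n / (1 + N * a) : ℕ) : ℤ) + n * kk s0 := by gcongr
              _ ≤ n + n * kk s0 := by gcongr
              _ = _ := by push_cast; ring
          · refine dvd_gv fun i => ⟨s0 i + N * j i, ?_⟩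
            push_cast; ring
        · intro j _ j' _ h
          funext i
          have := congrFun h i
          simp only [add_left_inj] at this
          exact mul_left_cancel₀ (by positivity) this
    _ = ∑ s ∈ box r ((1 + kk s0) * n), ∑ a ∈ Finset.range m,
        (if 1 + N * a ∣ gaff s0 N s then Nat.totient (1 + N * a) else 0) := Finset.sum_comm
    _ ≤ _ := Finset.sum_le_sum fun s _ => hW s

lemma Fsum_lower_two (s0 : Fin 2 → ℤ) (N m : ℕ) (hN : 1 ≤ N) :
    (m : ℝ) ^ 2 * Real.log m ≤ 16 * N * Fsum (gaff s0 N) ((1 + kk s0) * N * m) := by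
  have h1 := Fsum_lower_tot s0 N m hN
  rw [← mul_assoc] at h1
  have h2 : ((∑ a ∈ Finset.range m, Nat.totient (1 + N * a) * (N * m / (1 + N * a)) ^ 2 : ℕ) : ℝ)
      ≤ Fsum (gaff s0 N) ((1 + kk s0) * N * m) := by exact_mod_cast h1
  have h3 : ((m : ℝ) ^ 2 / 4) * ∑ a ∈ Finset.range m, (Nat.totient (1 + N * a) : ℝ) / ((1 + N * a : ℕ) : ℝ) ^ 2 ≤
      ((∑ a ∈ Finset.range m, Nat.totient (1 + N * a) * (N * m / (1 + N * a)) ^ 2 : ℕ) : ℝ) := by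
    rw [Finset.mul_sum, Nat.cast_sum]
    refine Finset.sum_le_sum fun a ha => ?_
    have ha := Finset.mem_range.1 ha
    have hp : (0 : ℝ) < ((1 + N * a : ℕ) : ℝ) := by positivity
    have h4 : (m : ℝ) / (2 * ((1 + N * a : ℕ) : ℝ)) ≤ ((N * m / (1 + N * a) : ℕ) : ℝ) := by
      rw [div_le_iff₀ (by positivity)]
      have hq : 1 ≤ N * m / (1 + N * a) := (Nat.one_le_div_iff (by omega)).2 (by nlinarith)
      have h5 : m ≤ N * m / (1 + N * a) * (2 * (1 + N * a)) := by
        have h6 := Nat.lt_mul_div_succ (N * m) (show 0 < 1 + N * a by omega)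
        have : m ≤ N * m := Nat.le_mul_of_pos_left _ (by omega)
        nlinarith
      exact_mod_cast h5
    rw [Nat.cast_mul, Nat.cast_pow]
    calc _ = (Nat.totient (1 + N * a) : ℝ) * ((m : ℝ) / (2 * ((1 + N * a : ℕ) : ℝ))) ^ 2 := by
          field_simp; ring
      _ ≤ _ := by gcongr
  have h4 := totient_sum N m hN
  have h5 := log_sum N m hN
  set H := ∑ a ∈ Finset.range m, 1 / ((1 + N * a : ℕ) : ℝ)
  set X := ∑ a ∈ Finset.range m, (Nat.totient (1 + N * a) : ℝ) / ((1 + N * a : ℕ) : ℝ) ^ 2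
  calc (m : ℝ) ^ 2 * Real.log m ≤ (m : ℝ) ^ 2 * (N * (4 * X)) := by gcongr; refine h5.trans ?_; gcongr; linarith
    _ = 16 * N * ((m : ℝ) ^ 2 / 4 * X) := by ring
    _ ≤ _ := by gcongr; exact h3.trans h2

end

section
lemma Fsum_mono {r : ℕ} (c : (Fin r → ℤ) → ℕ) {n m : ℕ} (h : n ≤ m) : Fsum c n ≤ Fsum c m := by
  unfold Fsum
  calc _ ≤ ∑ s ∈ box r n, Wt c m s := by
        refine Finset.sum_le_sum fun s _ => ?_
        unfold Wt
        split_ifs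
        · have := Nat.pow_le_pow_left h 2; omega
        · exact le_rfl
    _ ≤ _ := by
        refine Finset.sum_le_sum_of_subset ?_
        intro s hs
        rw [mem_box] at hs ⊢
        intro i
        exact (hs i).trans (by exact_mod_cast h)

/-- the four possible functions -/
def IsD (d : ℕ → ℝ) : Prop :=
  d = (fun n : ℕ => (n : ℝ) ^ 2) ∨ d = (fun n : ℕ => (n : ℝ)) ∨
        d = (fun n : ℕ => Real.log n) ∨ d = (fun _ : ℕ => (1 : ℝ))

lemma IsD.mono {d : ℕ → ℝ} (h : IsD d) : Monotone d := by
  intro n m hnm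
  have h1 : (n : ℝ) ≤ m := by exact_mod_cast hnm
  rcases h with rfl | rfl | rfl | rfl
  · simp only; gcongr
  · exact h1
  · simp only
    rcases Nat.eq_zero_or_pos n with h | h
    · subst h; simp; exact Real.log_natCast_nonneg m
    · exact Real.log_le_log (by exact_mod_cast h) h1
  · exact le_rfl

lemma IsD.nonneg {d : ℕ → ℝ} (h : IsD d) (n : ℕ) : 0 ≤ d n := by
  rcases h with rfl | rfl | rfl | rfl
  · positivity
  · positivity
  · exact Real.log_natCast_nonneg n
  · simp

lemma NT_aux (r : ℕ) (c : (Fin r → ℤ) → ℕ)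
    (hc : (c = fun _ => 1) ∨ ∃ s0 : Fin r → ℤ, ∃ N : ℕ, 1 ≤ N ∧ c = gaff s0 N) :
    ∃ d : ℕ → ℝ, IsD d ∧ ∃ E : ℕ, 1 ≤ E ∧
      (∀ n : ℕ, 1 ≤ n → (Fsum c n : ℝ) ≤ E * n ^ r * d (E * n)) ∧
      (∀ n : ℕ, 1 ≤ n → (n : ℝ) ^ r * d n ≤ E * Fsum c (E * n)) := by
  have hge : ∀ n : ℕ, (n : ℝ) ^ r ≤ Fsum c n := fun n => by exact_mod_cast Fsum_ge c n
  rcases hc with rfl | ⟨s0, N, hN, rfl⟩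
  · refine ⟨_, Or.inr (Or.inr (Or.inr rfl)), 3 ^ r, Nat.one_le_pow _ _ (by norm_num), ?_, ?_⟩
    · intro n hn
      have := Fsum_one_le (r := r) n hn
      rw [mul_one]
      exact_mod_cast this
    · intro n hn
      rw [mul_one]
      have h1 : (1 : ℝ) ≤ (3 ^ r : ℕ) := by exact_mod_cast Nat.one_le_pow _ _ (by norm_num)
      have h2 : Fsum (r := r) (fun _ => 1) n ≤ Fsum (r := r) (fun _ => 1) (3 ^ r * n) :=
        Fsum_mono _ (Nat.le_mul_of_pos_left _ (by positivity))
      have h3 : (Fsum (r := r) (fun _ => 1) n : ℝ) ≤ Fsum (r := r) (fun _ => 1) (3 ^ r * n) := by exact_mod_cast h2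
      have h4 := hge n
      have h5 : (0 : ℝ) ≤ Fsum (r := r) (fun _ => 1) (3 ^ r * n) := by positivity
      nlinarith
  · set c := gaff s0 N with hc
    set K := N + kk s0 with hK
    have hK1 : 1 ≤ K := by omega
    have hK1' : (1 : ℝ) ≤ K := by exact_mod_cast hK1
    have hup : ∀ n : ℕ, 1 ≤ n → (Fsum c n : ℝ) ≤ ((n : ℝ) ^ 2 + 1) +
        ((∑ e ∈ Finset.Icc 1 (K * n), e * (2 * ((K * n) / e) + 1) ^ r : ℕ) : ℝ) := by
      intro n hn; exact_mod_cast Fsum_upper s0 N n hN hn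
    have hup1 : ∀ n : ℕ, 1 ≤ n → (Fsum c n : ℝ) ≤ 2 * (n : ℝ) ^ 2 +
        ((∑ e ∈ Finset.Icc 1 (K * n), e * (2 * ((K * n) / e) + 1) ^ r : ℕ) : ℝ) := by
      intro n hn
      have h1 : (1 : ℝ) ≤ n := by exact_mod_cast hn
      have := hup n hn
      nlinarith
    rcases Nat.lt_or_ge r 3 with hr | hr
    · rcases (by omega : r = 0 ∨ r = 1 ∨ r = 2) with rfl | rfl | rfl
      · refine ⟨_, Or.inl rfl, 3 * K ^ 2, by nlinarith [Nat.pow_le_pow_left hK1 2], ?_, ?_⟩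
        · intro n hn
          have h1 : (1 : ℝ) ≤ n := by exact_mod_cast hn
          have h2 : (∑ e ∈ Finset.Icc 1 (K * n), e * (2 * ((K * n) / e) + 1) ^ 0) ≤ (K * n) ^ 2 := by
            calc _ ≤ ∑ e ∈ Finset.Icc 1 (K * n), K * n := by
                  refine Finset.sum_le_sum fun e he => ?_
                  simpa using (Finset.mem_Icc.1 he).2
              _ = _ := by simp; ring
          have h3 := hup1 n hn
          have h4 : ((∑ e ∈ Finset.Icc 1 (K * n), e * (2 * ((K * n) / e) + 1) ^ 0 : ℕ) : ℝ) ≤ (K * n) ^ 2 := by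
            exact_mod_cast h2
          refine (h3.trans (add_le_add_right h4 _)).trans ?_
          push_cast
          have h5 : (1 : ℝ) ≤ K ^ 2 := one_le_pow₀ hK1'
          have h6 : (1 : ℝ) ≤ (3 * K ^ 2) ^ 2 := one_le_pow₀ (by linarith)
          calc (2 : ℝ) * n ^ 2 + (K * n) ^ 2 ≤ 3 * (K : ℝ) ^ 2 * (n : ℝ) ^ 2 := by nlinarith [sq_nonneg (n : ℝ)]
            _ ≤ 3 * (K : ℝ) ^ 2 * (n : ℝ) ^ 2 * (3 * (K : ℝ) ^ 2) ^ 2 := le_mul_of_one_le_right (by positivity) h6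
            _ = _ := by ring
        · intro n hn
          have h1 : n ^ 2 ≤ Fsum c n := by
            unfold Fsum
            have h0 : ∀ s, c s = 0 := by intro s; simp [hc, gaff, gv]
            rw [Finset.sum_congr rfl (g := fun _ => n ^ 2 + 1) (fun s _ => by simp [Wt, h0])]
            rw [Finset.sum_const, card_box]; simp
          have hE : 1 ≤ 3 * K ^ 2 := by nlinarith [Nat.pow_le_pow_left hK1 2]
          have h2 : n ^ 2 ≤ (3 * K ^ 2) * Fsum c (3 * K ^ 2 * n) :=
            h1.trans ((Fsum_mono c (Nat.le_mul_of_pos_left _ hE)).trans (Nat.le_mul_of_pos_left _ hE))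
          simp only [pow_zero, one_mul]
          exact_mod_cast h2
      · refine ⟨_, Or.inr (Or.inl rfl), 5 * K ^ 2, by nlinarith [Nat.pow_le_pow_left hK1 2], ?_, ?_⟩
        · intro n hn
          have h1 : (1 : ℝ) ≤ n := by exact_mod_cast hn
          have h3 := hup1 n hn
          have h4 : ((∑ e ∈ Finset.Icc 1 (K * n), e * (2 * ((K * n) / e) + 1) ^ 1 : ℕ) : ℝ) ≤ 3 * (K * n) ^ 2 := by
            exact_mod_cast sum_e_one (K * n)
          refine (h3.trans (add_le_add_right h4 _)).trans ?_
          push_cast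
          have h5 : (1 : ℝ) ≤ K ^ 2 := one_le_pow₀ hK1'
          calc (2 : ℝ) * n ^ 2 + 3 * (K * n) ^ 2 ≤ 5 * (K : ℝ) ^ 2 * (n : ℝ) ^ 2 := by nlinarith [sq_nonneg (n : ℝ)]
            _ ≤ 5 * (K : ℝ) ^ 2 * (n : ℝ) ^ 2 * (5 * (K : ℝ) ^ 2) := le_mul_of_one_le_right (by positivity) (by linarith)
            _ = _ := by ring
        · intro n hn
          have hE : 2 * K ≤ 5 * K ^ 2 := by nlinarith
          have h1 := Fsum_lower_one s0 N n hN hn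
          have h2 : n ^ 2 ≤ (5 * K ^ 2) * Fsum c (5 * K ^ 2 * n) := by
            refine h1.trans (Nat.mul_le_mul (by nlinarith) (Fsum_mono c (Nat.mul_le_mul_right _ ?_)))
            omega
          simp only [pow_one, ← pow_two]
          exact_mod_cast h2
      · refine ⟨_, Or.inr (Or.inr (Or.inl rfl)), 20 * K ^ 2, by nlinarith [Nat.pow_le_pow_left hK1 2], ?_, ?_⟩
        · intro n hn
          have h1 : (1 : ℝ) ≤ n := by exact_mod_cast hn
          have h3 := hup1 n hn
          have h4 := sum_e_two (K * n) (Nat.mul_pos hK1 hn)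
          refine (h3.trans (add_le_add_right h4 _)).trans ?_
          push_cast
          have h5 : (1 : ℝ) ≤ K ^ 2 := one_le_pow₀ hK1'
          set l := Real.log (20 * K ^ 2 * n)
          have hl1 : 1 ≤ l := by
            rw [Real.le_log_iff_exp_le (by positivity)]
            have := Real.exp_one_lt_d9
            nlinarith
          have hl2 : Real.log (K * n) ≤ l := by
            refine Real.log_le_log (by positivity) ?_
            gcongr
            nlinarith
          calc (2 : ℝ) * n ^ 2 + 9 * (K * n) ^ 2 * (1 + Real.log (K * n))
              ≤ 2 * (K ^ 2 * n ^ 2 * l) + 9 * (K * n) ^ 2 * (l + l) := by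
                gcongr
                rw [mul_right_comm]
                refine le_mul_of_one_le_left (by positivity) ?_
                nlinarith
            _ = _ := by ring
        · intro n hn
          have h1 := Fsum_lower_two s0 N n hN
          refine h1.trans ?_
          have hNK : (N : ℝ) ≤ K := by exact_mod_cast (by omega : N ≤ K)
          have h2 : Fsum c ((1 + kk s0) * N * n) ≤ Fsum c (20 * K ^ 2 * n) := by
            refine Fsum_mono c (Nat.mul_le_mul_right _ ?_)
            nlinarith [Nat.mul_le_mul (show 1 + kk s0 ≤ K by omega) (show N ≤ K by omega)]
          have h3 : (Fsum c ((1 + kk s0) * N * n) : ℝ) ≤ Fsum c (20 * K ^ 2 * n) := by exact_mod_cast h2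
          push_cast
          gcongr
          · norm_num
          · nlinarith
    · refine ⟨_, Or.inr (Or.inr (Or.inr rfl)), 2 + 3 ^ r * K ^ r * 2, by omega, ?_, ?_⟩
      · intro n hn
        have h1 : (1 : ℝ) ≤ n := by exact_mod_cast hn
        have h3 := hup1 n hn
        have h4 := sum_e_three r (K * n) hr
        refine (h3.trans (add_le_add_right h4 _)).trans ?_
        have h5 : (n : ℝ) ^ 2 ≤ n ^ r := pow_le_pow_right₀ h1 (by omega)
        push_cast
        rw [mul_pow]
        calc _ ≤ 2 * (n : ℝ) ^ r + 3 ^ r * (K ^ r * n ^ r) * 2 := by gcongr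
          _ = _ := by ring
      · intro n hn
        rw [mul_one]
        set E := 2 + 3 ^ r * K ^ r * 2
        have h1 : n ^ r ≤ E * Fsum c (E * n) :=
          (Fsum_ge c n).trans ((Fsum_mono c (Nat.le_mul_of_pos_left _ (by omega))).trans (Nat.le_mul_of_pos_left _ (by omega)))
        exact_mod_cast h1

lemma NT (r t : ℕ) (c : (Fin r → ℤ) → ℕ)
    (hc : (c = fun _ => 1) ∨ ∃ s0 : Fin r → ℤ, ∃ N : ℕ, 1 ≤ N ∧ c = gaff s0 N) :
    ∃ d : ℕ → ℝ, IsD d ∧ ∃ E : ℕ, 1 ≤ E ∧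
      (∀ n : ℕ, 1 ≤ n → ((Fsum c n * (2 * n + 1) ^ t : ℕ) : ℝ) ≤ E * ((n : ℝ) ^ (r + t) * d (E * n))) ∧
      (∀ n : ℕ, 1 ≤ n → (n : ℝ) ^ (r + t) * d n ≤
        E * ((Fsum c (E * n) * (2 * (E * n) + 1) ^ t : ℕ) : ℝ)) := by
  obtain ⟨d, hd, E, hE, h1, h2⟩ := NT_aux r c hc
  refine ⟨d, hd, 3 ^ t * E, Nat.mul_pos (by positivity) hE, ?_, ?_⟩
  · intro n hn
    have hn' : (1 : ℝ) ≤ n := by exact_mod_cast hn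
    have h3 : d (E * n) ≤ d (3 ^ t * E * n) :=
      hd.mono (Nat.mul_le_mul_right _ (Nat.le_mul_of_pos_left _ (by positivity)))
    have h4 : ((2 * n + 1 : ℕ) : ℝ) ≤ 3 * n := by push_cast; linarith
    rw [Nat.cast_mul, Nat.cast_pow]
    have := hd.nonneg (E * n)
    calc _ ≤ (E * n ^ r * d (E * n)) * (3 * (n : ℝ)) ^ t := by
          gcongr
          exact h1 n hn
      _ ≤ (E * n ^ r * d (3 ^ t * E * n)) * (3 * (n : ℝ)) ^ t := by gcongr
      _ = _ := by push_cast; ring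
  · intro n hn
    have h3 : (E : ℝ) * Fsum c (E * n) ≤ ((3 ^ t * E : ℕ) : ℝ) * Fsum c (3 ^ t * E * n) := by
      have : E * Fsum c (E * n) ≤ (3 ^ t * E) * Fsum c (3 ^ t * E * n) :=
        Nat.mul_le_mul (Nat.le_mul_of_pos_left _ (by positivity))
          (Fsum_mono c (Nat.mul_le_mul_right _ (Nat.le_mul_of_pos_left _ (by positivity))))
      exact_mod_cast this
    have h4 : (n : ℝ) ≤ ((2 * (3 ^ t * E * n) + 1 : ℕ) : ℝ) := by
      have : n ≤ 3 ^ t * E * n := Nat.le_mul_of_pos_left _ (Nat.mul_pos (by positivity) hE)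
      exact_mod_cast (by omega)
    have h5 := h2 n hn
    have h6 := hd.nonneg n
    rw [Nat.cast_mul (Fsum c _), Nat.cast_pow (2 * _ + 1), ← mul_assoc]
    calc (n : ℝ) ^ (r + t) * d n = (n ^ r * d n) * (n : ℝ) ^ t := by ring
      _ ≤ _ := mul_le_mul (h5.trans h3) (pow_le_pow_left₀ (by positivity) h4 t) (by positivity) (by positivity)

end

section
section
variable {G : Type*} [Group G] (ψ : G ≃* G)

lemma tc_refl (x : G) : TwistedConj ψ x x := ⟨1, by simp⟩

lemma tc_symm {x y : G} (h : TwistedConj ψ x y) : TwistedConj ψ y x := by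
  obtain ⟨g, rfl⟩ := h
  exact ⟨g⁻¹, by simp [mul_assoc]⟩

lemma tc_trans {x y w : G} (h : TwistedConj ψ x y) (h' : TwistedConj ψ y w) : TwistedConj ψ x w := by
  obtain ⟨g, rfl⟩ := h
  obtain ⟨k, rfl⟩ := h'
  exact ⟨k * g, by simp [mul_assoc]⟩

lemma cls_eq {x y : G} :
    ({w | TwistedConj ψ x w} : Set G) = {w | TwistedConj ψ y w} ↔ TwistedConj ψ x y := by
  constructor
  · intro h
    have : y ∈ ({w | TwistedConj ψ y w} : Set G) := tc_refl ψ y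
    rw [← h] at this
    exact this
  · intro h
    ext w
    exact ⟨fun h' => tc_trans ψ (tc_symm ψ h) h', fun h' => tc_trans ψ h h'⟩

theorem counting {S : Finset G} (hgen : Subgroup.closure (S : Set G) = ⊤) (z : G)
    {r t : ℕ} (p : G → (Fin r → ℤ) × (Fin t → ℤ)) (c : G → ℕ) (c' : (Fin r → ℤ) → ℕ) (C T : ℕ)
    (hC : 1 ≤ C)
    (h1 : ∀ (x : G) (i j : ℤ), TwistedConj ψ (x * z ^ i) (x * z ^ j) ↔ (c x : ℤ) ∣ i - j)
    (h2 : ∀ x y, TwistedConj ψ x y → p x = p y)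
    (hpz : ∀ x (i : ℤ), p (x * z ^ i) = p x)
    (hB1 : ∀ x, c x ≤ C * c' (p x).1) (hB2 : ∀ x, c' (p x).1 ≤ C * c x)
    (h3 : ∀ n g, InB S n g → (p g).1 ∈ box r (C * n) ∧ (p g).2 ∈ box t (C * n))
    (h4 : ∀ n, ∀ u : (Fin r → ℤ) × (Fin t → ℤ), u.1 ∈ box r n → u.2 ∈ box t n →
      ∃ x, p x = u ∧ InB S (C * n) x)
    (h5 : ∀ (n : ℕ) (i : ℤ), 1 ≤ n → |i| ≤ (n : ℤ) ^ 2 → InB S (C * n) (z ^ i))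
    (h6 : ∀ n : ℕ, 1 ≤ n → ∀ u, ∃ R : Finset G, R.card ≤ T ∧ (∀ x ∈ R, p x = u) ∧
      ∀ g, InB S n g → p g = u → ∃ x ∈ R, ∃ j : ℤ, |j| ≤ C * (n : ℤ) ^ 2 ∧ TwistedConj ψ g (x * z ^ j))
    (h7 : ∀ n : ℕ, 1 ≤ n → ∀ s ∈ box r n, c' s ≤ C * n) :
    ∃ D : ℕ, 1 ≤ D ∧ ∀ n, 1 ≤ n →
      twistedGrowth ψ S n ≤ D * (Fsum c' (D * n) * (2 * (D * n) + 1) ^ t) ∧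
      Fsum c' n * (2 * n + 1) ^ t ≤ D * twistedGrowth ψ S (D * n) := by
  classical
  set cl : G → Set G := fun x => {y | TwistedConj ψ x y} with hcl
  have hgr : ∀ n, twistedGrowth ψ S n = (cl '' {g | InB S n g}).ncard := by
    intro n
    unfold twistedGrowth
    simp only [wordNorm_le_iff hgen]
    rfl
  have hfin : ∀ n, (cl '' {g | InB S n g}).Finite := fun n => (InB.finite n).image _
  have hgrmono : ∀ n m, n ≤ m → twistedGrowth ψ S n ≤ twistedGrowth ψ S m := by
    intro n m h
    rw [hgr, hgr]
    exact Set.ncard_le_ncard (Set.image_mono fun g hg => InB.mono hg h) (hfin m)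
  -- upper
  have upper : ∀ n, 1 ≤ n → twistedGrowth ψ S n ≤
      (T * (2 * C + 1)) * (Fsum c' (C * n) * (2 * (C * n) + 1) ^ t) := by
    intro n hn
    choose R hR1 hR2 hR3 using h6 n hn
    let J : G → Finset ℤ := fun x => if c x = 0 then Finset.Icc (-(C * (n : ℤ) ^ 2)) (C * (n : ℤ) ^ 2)
      else Finset.Ico 0 (c x : ℤ)
    let U : Finset (Set G) := (box r (C * n) ×ˢ box t (C * n)).biUnion
      (fun u => (R u).biUnion fun x => (J x).image (fun j => cl (x * z ^ j)))
    have hsub : cl '' {g | InB S n g} ⊆ (U : Set (Set G)) := by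
      rintro _ ⟨g, hg, rfl⟩
      obtain ⟨x, hx, j, hj, hgx⟩ := hR3 (p g) g hg rfl
      have hh := h3 n g hg
      rw [Finset.mem_coe, Finset.mem_biUnion]
      refine ⟨p g, Finset.mem_product.2 hh, Finset.mem_biUnion.2 ⟨x, hx, ?_⟩⟩
      rw [Finset.mem_image]
      by_cases hc : c x = 0
      · refine ⟨j, ?_, (cls_eq ψ).2 (tc_symm ψ hgx)⟩
        simp only [J, hc, if_true]
        rw [Finset.mem_Icc]
        exact abs_le.1 hj
      · refine ⟨j % (c x : ℤ), ?_, (cls_eq ψ).2 (tc_symm ψ (tc_trans ψ hgx ((h1 x _ _).2 ?_)))⟩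
        · simp only [J, hc, if_false]
          rw [Finset.mem_Ico]
          exact ⟨Int.emod_nonneg _ (by exact_mod_cast hc), Int.emod_lt_of_pos _ (by omega)⟩
        · exact Int.dvd_self_sub_emod
    have hJ : ∀ u, ∀ x ∈ R u, (J x).card ≤ (2 * C + 1) * Wt c' (C * n) u.1 := by
      intro u x hx
      have hpx := hR2 u x hx
      have e1 := hB1 x
      have e2 := hB2 x
      rw [hpx] at e1 e2
      by_cases hc : c x = 0
      · have hc' : c' u.1 = 0 := by rw [hc] at e2; simpa using e2
        simp only [J, hc, if_true, Wt, hc']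
        rw [Int.card_Icc]
        have : (C * (n : ℤ) ^ 2 + 1 - -(C * (n : ℤ) ^ 2)).toNat = 2 * C * n ^ 2 + 1 := by
          rw [show (C * (n : ℤ) ^ 2 + 1 - -(C * (n : ℤ) ^ 2)) = ((2 * C * n ^ 2 + 1 : ℕ) : ℤ) by push_cast; ring]
          exact Int.toNat_natCast _
        rw [this]
        have hle : n ^ 2 ≤ (C * n) ^ 2 := Nat.pow_le_pow_left (Nat.le_mul_of_pos_left _ hC) 2
        nlinarith
      · have hc' : c' u.1 ≠ 0 := by intro h; rw [h] at e1; omega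
        simp only [J, hc, if_false, Wt, hc']
        simp only [Int.card_Ico, sub_zero, Int.toNat_natCast]
        nlinarith
    rw [hgr]
    calc _ ≤ (U : Set (Set G)).ncard := Set.ncard_le_ncard hsub U.finite_toSet
      _ = U.card := Set.ncard_coe_finset U
      _ ≤ ∑ u ∈ box r (C * n) ×ˢ box t (C * n), T * ((2 * C + 1) * Wt c' (C * n) u.1) := by
          refine Finset.card_biUnion_le.trans (Finset.sum_le_sum fun u _ => ?_)
          refine Finset.card_biUnion_le.trans ?_
          calc _ ≤ ∑ x ∈ R u, (2 * C + 1) * Wt c' (C * n) u.1 :=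
                Finset.sum_le_sum fun x hx => Finset.card_image_le.trans (hJ u x hx)
            _ = (R u).card * ((2 * C + 1) * Wt c' (C * n) u.1) := by simp
            _ ≤ _ := Nat.mul_le_mul_right _ (hR1 u)
      _ = ∑ s ∈ box r (C * n), (T * (2 * C + 1) * (2 * (C * n) + 1) ^ t) * Wt c' (C * n) s := by
          rw [Finset.sum_product]
          refine Finset.sum_congr rfl fun s _ => ?_
          dsimp only
          rw [Finset.sum_const, card_box, smul_eq_mul]
          ring
      _ = _ := by rw [← Finset.mul_sum, Fsum]; ring
  -- lower
  have lower : ∀ n, 1 ≤ n → Fsum c' n * (2 * n + 1) ^ t ≤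
      C * twistedGrowth ψ S ((C + C * C ^ 2) * n) := by
    intro n hn
    have h4' : ∀ u : (Fin r → ℤ) × (Fin t → ℤ), ∃ x, u ∈ box r n ×ˢ box t n → (p x = u ∧ InB S (C * n) x) := by
      intro u
      by_cases hu : u ∈ box r n ×ˢ box t n
      · obtain ⟨x, hx⟩ := h4 n u (Finset.mem_product.1 hu).1 (Finset.mem_product.1 hu).2
        exact ⟨x, fun _ => hx⟩
      · exact ⟨1, fun h => absurd h hu⟩
    choose X hX using h4'
    let m : (Fin r → ℤ) × (Fin t → ℤ) → ℕ := fun u => if c (X u) = 0 then n ^ 2 + 1 else c (X u)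
    have hm : ∀ u ∈ box r n ×ˢ box t n, Wt c' n u.1 ≤ C * m u := by
      intro u hu
      have e1 := hB1 (X u)
      have e2 := hB2 (X u)
      rw [(hX u hu).1] at e1 e2
      by_cases hc : c (X u) = 0
      · have hc' : c' u.1 = 0 := by rw [hc] at e2; simpa using e2
        simp only [m, hc, if_true, Wt, hc']
        nlinarith
      · have hc' : c' u.1 ≠ 0 := by intro h; rw [h] at e1; omega
        simp only [m, hc, if_false, Wt, hc']
        exact e2
    let Sg : Finset (Σ _ : (Fin r → ℤ) × (Fin t → ℤ), ℕ) :=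
      (box r n ×ˢ box t n).sigma (fun u => Finset.range (m u))
    have hcard : Sg.card ≤ twistedGrowth ψ S ((C + C * C ^ 2) * n) := by
      rw [hgr, ← Set.ncard_coe_finset Sg]
      refine Set.ncard_le_ncard_of_injOn (fun v => cl (X v.1 * z ^ (v.2 : ℤ))) ?_ ?_ (hfin _)
      · rintro ⟨u, i⟩ hv
        simp only [Sg, Finset.mem_coe, Finset.mem_sigma, Finset.mem_range] at hv
        obtain ⟨hu, hi⟩ := hv
        refine ⟨_, ?_, rfl⟩
        change InB S _ _
        rw [add_mul, mul_assoc C (C ^ 2) n]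
        refine (hX u hu).2.mul (h5 (C ^ 2 * n) i (Nat.mul_pos (by positivity) hn) ?_)
        have hi' : i ≤ (C ^ 2 * n) ^ 2 := by
          have hC2 : 1 ≤ C ^ 2 := Nat.one_le_pow _ _ hC
          have hx : n ≤ C ^ 2 * n := Nat.le_mul_of_pos_left _ hC2
          by_cases hc : c (X u) = 0
          · simp only [m, hc, if_true] at hi
            have : n ^ 2 ≤ (C ^ 2 * n) ^ 2 := Nat.pow_le_pow_left hx 2
            omega
          · simp only [m, hc, if_false] at hi
            have e1 := hB1 (X u)
            rw [(hX u hu).1] at e1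
            have e3 := h7 n hn u.1 (Finset.mem_product.1 hu).1
            have : C * c' u.1 ≤ C ^ 2 * n := by nlinarith
            nlinarith
        rw [Nat.abs_cast]
        exact_mod_cast hi'
      · rintro ⟨u, i⟩ hv ⟨u', i'⟩ hv' h
        simp only [Sg, Finset.mem_coe, Finset.mem_sigma, Finset.mem_range] at hv hv'
        obtain ⟨hu, hi⟩ := hv
        obtain ⟨hu', hi'⟩ := hv'
        have h := (cls_eq ψ).1 h
        have hp := h2 _ _ h
        simp only [hpz, (hX u hu).1, (hX u' hu').1] at hp
        subst hp
        have hd : (c (X u) : ℤ) ∣ (i : ℤ) - i' := (h1 _ _ _).1 h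
        have : i = i' := by
          by_cases hc : c (X u) = 0
          · rw [hc] at hd
            have := zero_dvd_iff.1 (by exact_mod_cast hd : (0 : ℤ) ∣ (i : ℤ) - i')
            omega
          · simp only [m, hc, if_false] at hi hi'
            have := Int.eq_zero_of_abs_lt_dvd hd (by rw [abs_lt]; constructor <;> omega)
            omega
        rw [this]
    calc Fsum c' n * (2 * n + 1) ^ t = ∑ u ∈ box r n ×ˢ box t n, Wt c' n u.1 := by
          rw [Finset.sum_product, Fsum, Finset.sum_mul]
          refine Finset.sum_congr rfl fun s _ => ?_
          dsimp only
          rw [Finset.sum_const, card_box, smul_eq_mul, mul_comm]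
      _ ≤ ∑ u ∈ box r n ×ˢ box t n, C * m u := Finset.sum_le_sum hm
      _ = C * Sg.card := by rw [← Finset.mul_sum, Finset.card_sigma]; simp
      _ ≤ _ := Nat.mul_le_mul_left _ hcard
  refine ⟨T * (2 * C + 1) + (C + C * C ^ 2), by omega, fun n hn => ⟨?_, ?_⟩⟩
  · refine (upper n hn).trans (Nat.mul_le_mul (by omega) (Nat.mul_le_mul (Fsum_mono _ ?_) (Nat.pow_le_pow_left ?_ _)))
    · refine Nat.mul_le_mul_right _ (by nlinarith)
    · have : C * n ≤ (T * (2 * C + 1) + (C + C * C ^ 2)) * n := Nat.mul_le_mul_right _ (by nlinarith)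
      omega
  · refine (lower n hn).trans (Nat.mul_le_mul (by nlinarith) (hgrmono _ _ (Nat.mul_le_mul_right _ (by omega))))

lemma growthLE_of {f g : ℕ → ℝ} (hg : Monotone g) (E D : ℕ) (hD : 1 ≤ D)
    (h : ∀ n, 1 ≤ n → f n ≤ E * g (D * n)) : GrowthLE f g := by
  refine ⟨E + D + ⌈max 1 (f 0)⌉₊, by omega, fun n => ?_⟩
  set K := E + D + ⌈max 1 (f 0)⌉₊ with hK
  have hK1 : (1 : ℝ) ≤ K := by exact_mod_cast (by omega : 1 ≤ K)
  have hm : (1 : ℝ) ≤ max 1 (g (K * n)) := le_max_left _ _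
  rcases Nat.eq_zero_or_pos n with hn | hn
  · subst hn
    have h1 : max 1 (f 0) ≤ K := (Nat.le_ceil _).trans (by exact_mod_cast (by omega))
    nlinarith
  · refine max_le (by nlinarith) ?_
    have h1 : g (D * n) ≤ max 1 (g (K * n)) := (hg (Nat.mul_le_mul_right _ (by omega))).trans (le_max_right _ _)
    calc f n ≤ E * g (D * n) := h n hn
      _ ≤ E * max 1 (g (K * n)) := by gcongr
      _ ≤ _ := by
        gcongr
        exact (by omega : E ≤ K)

/-- combination of the counting theorem and the number theory -/
theorem growth_combine {S : Finset G} (hgen : Subgroup.closure (S : Set G) = ⊤) {r t : ℕ} (c' : (Fin r → ℤ) → ℕ)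
    (hc : (c' = fun _ => 1) ∨ ∃ s0 : Fin r → ℤ, ∃ N : ℕ, 1 ≤ N ∧ c' = gaff s0 N)
    (h : ∃ D : ℕ, 1 ≤ D ∧ ∀ n, 1 ≤ n →
      twistedGrowth ψ S n ≤ D * (Fsum c' (D * n) * (2 * (D * n) + 1) ^ t) ∧
      Fsum c' n * (2 * n + 1) ^ t ≤ D * twistedGrowth ψ S (D * n)) :
    ∃ d : ℕ → ℝ, IsD d ∧ GrowthEquiv (fun n => (twistedGrowth ψ S n : ℝ)) (fun n => (n : ℝ) ^ (r + t) * d n) := by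
  obtain ⟨D, hD, hh⟩ := h
  obtain ⟨d, hd, E, hE, e1, e2⟩ := NT r t c' hc
  have hgrmono : Monotone (fun n => (twistedGrowth ψ S n : ℝ)) := by
    intro n m h
    simp only [twistedGrowth, wordNorm_le_iff hgen]
    exact_mod_cast Set.ncard_le_ncard (Set.image_mono fun g hg => InB.mono hg h) ((InB.finite m).image _)
  have hgmono : Monotone (fun n : ℕ => (n : ℝ) ^ (r + t) * d n) := by
    intro n m h
    have h' : (n : ℝ) ≤ m := by exact_mod_cast h
    have := hd.nonneg n
    have := hd.mono h
    simp only
    gcongr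
  refine ⟨d, hd, growthLE_of hgmono (D * E) (E * D) (Nat.mul_pos hE hD) ?_, growthLE_of hgrmono (E * D) (D * E) (Nat.mul_pos hD hE) ?_⟩
  · intro n hn
    have h1 := (hh n hn).1
    have h1' : (twistedGrowth ψ S n : ℝ) ≤ D * ((Fsum c' (D * n) * (2 * (D * n) + 1) ^ t : ℕ) : ℝ) := by exact_mod_cast h1
    have h2 := e1 (D * n) (Nat.mul_pos hD hn)
    have hE1 : (1 : ℝ) ≤ E := by exact_mod_cast hE
    refine h1'.trans ?_
    have h3 := hd.nonneg (E * D * n)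
    calc _ ≤ (D : ℝ) * (E * ((D * n : ℕ) : ℝ) ^ (r + t) * d (E * D * n)) := by
          rw [mul_assoc E D n, mul_assoc (E : ℝ)]; gcongr
      _ ≤ (D : ℝ) * (E * ((E * D * n : ℕ) : ℝ) ^ (r + t) * d (E * D * n)) := by
          have h5 : ((D * n : ℕ) : ℝ) ≤ ((E * D * n : ℕ) : ℝ) := by
            rw [mul_assoc]
            exact_mod_cast Nat.le_mul_of_pos_left _ hE
          have h6 := pow_le_pow_left₀ (by positivity) h5 (r + t)
          refine mul_le_mul_of_nonneg_left (mul_le_mul_of_nonneg_right (mul_le_mul_of_nonneg_left h6 ?_) h3) ?_ <;> positivity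
      _ = _ := by push_cast; ring
  · intro n hn
    have h1 := (hh (E * n) (Nat.mul_pos hE hn)).2
    have h1' : ((Fsum c' (E * n) * (2 * (E * n) + 1) ^ t : ℕ) : ℝ) ≤ D * (twistedGrowth ψ S (D * (E * n)) : ℝ) := by
      exact_mod_cast h1
    have h2 := e2 n hn
    calc _ ≤ _ := h2
      _ ≤ E * (D * (twistedGrowth ψ S (D * (E * n)) : ℝ)) := by gcongr
      _ = _ := by rw [mul_assoc D E n]; push_cast; ring

end

end

section
lemma rk_null {A A' : Type*} [AddCommGroup A] [AddCommGroup A'] [Module.Finite ℤ A] (f : A →ₗ[ℤ] A') :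
    Module.finrank ℤ (LinearMap.range f) + Module.finrank ℤ (LinearMap.ker f) = Module.finrank ℤ A := by
  rw [← f.quotKerEquivRange.finrank_eq]
  exact Submodule.finrank_quotient_add_finrank _

theorem lattice {A : Type*} [AddCommGroup A] [Module.Free ℤ A] [Module.Finite ℤ A] (M : Submodule ℤ A)
    {l : ℕ} (v : A →ₗ[ℤ] (Fin l → ℤ)) (hv : ∀ m ∈ M, v m = 0) :
    ∃ (r t ρ : ℕ) (p : A →ₗ[ℤ] (Fin r → ℤ) × (Fin t → ℤ)) (B : (Fin r → ℤ) →ₗ[ℤ] (Fin l → ℤ))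
      (D : ℕ) (f : Fin ρ → A) (κ : A →ₗ[ℤ] (Fin ρ → ℤ)),
      Function.Surjective p ∧ r + t + Module.finrank ℤ M = Module.finrank ℤ A ∧
      (∀ m ∈ M, p m = 0) ∧ Function.Injective B ∧ (∀ a, v a = B (p a).1) ∧ 1 ≤ D ∧
      (∀ a, p a = 0 → a = ∑ i, κ a i • f i) ∧ (∀ i, D • f i ∈ M) := by
  classical
  let P : Submodule ℤ A := (Submodule.torsion ℤ (A ⧸ M)).comap M.mkQ
  have hP : ∀ a, a ∈ P ↔ ∃ n : ℕ, n ≠ 0 ∧ n • a ∈ M := by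
    intro a
    simp only [P, Submodule.mem_comap, Submodule.mem_torsion_iff]
    constructor
    · rintro ⟨n, hn⟩
      refine ⟨(n : ℤ).natAbs, Int.natAbs_ne_zero.2 (nonZeroDivisors.coe_ne_zero n), ?_⟩
      have h1 : (n : ℤ) • a ∈ M := by
        rw [← Submodule.Quotient.mk_eq_zero]
        exact hn
      rcases Int.natAbs_eq (n : ℤ) with h | h
      · rw [h] at h1
        rwa [natCast_zsmul] at h1
      · rw [h, neg_smul, natCast_zsmul] at h1
        exact (Submodule.neg_mem_iff _).1 h1
    · rintro ⟨n, hn, h⟩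
      refine ⟨⟨(n : ℤ), by simpa using hn⟩, ?_⟩
      change (n : ℤ) • M.mkQ a = 0
      rw [natCast_zsmul, ← map_nsmul]
      exact (Submodule.Quotient.mk_eq_zero M).2 h
  have hMP : M ≤ P := fun m hm => (hP m).2 ⟨1, by simp, by simpa using hm⟩
  have hsat : ∀ (n : ℤ) a, n ≠ 0 → n • a ∈ P → a ∈ P := by
    intro n a hn h
    obtain ⟨m, hm, h'⟩ := (hP _).1 h
    refine (hP a).2 ⟨m * n.natAbs, by simp [hm, hn], ?_⟩
    rw [← natCast_zsmul, smul_smul] at h'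
    rw [← natCast_zsmul]
    push_cast
    rcases abs_choice n with h1 | h1
    · rw [h1]; exact h'
    · rw [h1, mul_neg, neg_smul]; exact M.neg_mem h'
  have htf : Module.IsTorsionFree ℤ (A ⧸ P) := by
    refine Module.IsTorsionFree.of_smul_eq_zero ?_
    intro n x h
    by_contra hcon
    push Not at hcon
    obtain ⟨a, rfl⟩ := P.mkQ_surjective x
    rw [← map_smul] at h
    refine hcon.2 ?_
    simp only [Submodule.mkQ_apply, Submodule.Quotient.mk_eq_zero] at h ⊢
    exact hsat n a hcon.1 h
  have : Module.Free ℤ (A ⧸ P) := Module.free_of_finite_type_torsion_free'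
  have hvP : P ≤ LinearMap.ker v := by
    intro a ha
    obtain ⟨n, hn, h⟩ := (hP a).1 ha
    have := hv _ h
    rw [map_nsmul] at this
    exact (smul_eq_zero.1 this).resolve_left hn
  let f2 := P.liftQ v hvP
  let f2r := f2.rangeRestrict
  obtain ⟨σ2, hσ2⟩ := Module.projective_lifting_property f2r LinearMap.id f2.surjective_rangeRestrict
  obtain ⟨σ, hσ⟩ := Module.projective_lifting_property P.mkQ LinearMap.id P.mkQ_surjective
  have hσ2' : ∀ x, f2r (σ2 x) = x := fun x => LinearMap.congr_fun hσ2 x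
  have hσ' : ∀ x, P.mkQ (σ x) = x := fun x => LinearMap.congr_fun hσ x
  let e1 := (Module.finBasis ℤ (LinearMap.range f2)).equivFun
  let e2 := (Module.finBasis ℤ (LinearMap.ker f2)).equivFun
  let bP := Module.finBasis ℤ P
  have hker : ∀ x, ((LinearMap.id : (A ⧸ P) →ₗ[ℤ] (A ⧸ P)) - σ2 ∘ₗ f2r) x ∈ LinearMap.ker f2 := by
    intro x
    rw [LinearMap.mem_ker]
    have h1 : f2r (((LinearMap.id : (A ⧸ P) →ₗ[ℤ] (A ⧸ P)) - σ2 ∘ₗ f2r) x) = 0 := by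
      rw [LinearMap.sub_apply, map_sub, LinearMap.comp_apply, hσ2', LinearMap.id_apply, sub_self]
    exact congrArg Subtype.val h1
  let k2 : (A ⧸ P) →ₗ[ℤ] LinearMap.ker f2 := LinearMap.codRestrict _ _ hker
  let p0 : (A ⧸ P) →ₗ[ℤ] _ := ((e1.toLinearMap ∘ₗ f2r).prod (e2.toLinearMap ∘ₗ k2))
  have hκ : ∀ a, ((LinearMap.id : A →ₗ[ℤ] A) - σ ∘ₗ P.mkQ) a ∈ P := by
    intro a
    rw [← Submodule.Quotient.mk_eq_zero, ← Submodule.mkQ_apply, LinearMap.sub_apply, map_sub,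
      LinearMap.comp_apply, hσ', LinearMap.id_apply, sub_self]
  let κ0 : A →ₗ[ℤ] P := LinearMap.codRestrict _ _ hκ
  have hf : ∀ i, ∃ n : ℕ, n ≠ 0 ∧ n • (bP i : A) ∈ M := fun i => (hP _).1 (bP i).2
  choose nn hn0 hn1 using hf
  have hD : ∀ i, (∏ i, nn i) • (bP i : A) ∈ M := by
    intro i
    rw [← Finset.prod_erase_mul _ _ (Finset.mem_univ i), mul_smul]
    exact M.nsmul_mem (hn1 i) _
  have hD0 : (∏ i, nn i) ≠ 0 := Finset.prod_ne_zero_iff.2 fun i _ => hn0 i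
  have hDP : ∀ a ∈ P, (∏ i, nn i) • a ∈ M := by
    intro a ha
    have := bP.sum_repr ⟨a, ha⟩
    have h2 : _ = a := congrArg Subtype.val this
    rw [← h2]
    simp only [Submodule.coe_sum, Submodule.coe_smul, Finset.smul_sum]
    refine M.sum_mem fun i _ => ?_
    rw [smul_comm]
    exact M.smul_mem _ (hD i)
  refine ⟨_, _, _, p0 ∘ₗ P.mkQ, (LinearMap.range f2).subtype ∘ₗ e1.symm.toLinearMap, ∏ i, nn i,
    fun i => (bP i : A), bP.equivFun.toLinearMap ∘ₗ κ0, ?_, ?_, ?_, ?_, ?_, ?_, ?_, hD⟩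
  · rintro ⟨s, u⟩
    obtain ⟨a, ha⟩ := P.mkQ_surjective (σ2 (e1.symm s) + (e2.symm u : A ⧸ P))
    refine ⟨a, ?_⟩
    have hz : f2r (e2.symm u : A ⧸ P) = 0 := Subtype.ext (LinearMap.mem_ker.1 (e2.symm u).2)
    have h1 : f2r (P.mkQ a) = e1.symm s := by
      rw [ha, map_add, hσ2', hz, add_zero]
    have h2 : k2 (P.mkQ a) = e2.symm u := by
      apply Subtype.ext
      change P.mkQ a - σ2 (f2r (P.mkQ a)) = _
      rw [h1, ha]; abel
    change (e1 (f2r (P.mkQ a)), e2 (k2 (P.mkQ a))) = _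
    rw [h1, h2]; simp
  · have h1 : Module.finrank ℤ P = Module.finrank ℤ M := by
      refine le_antisymm ?_ (Submodule.finrank_mono hMP)
      let φ : P →ₗ[ℤ] M := LinearMap.codRestrict M ((∏ i, nn i) • P.subtype) (fun x => hDP x x.2)
      refine LinearMap.finrank_le_finrank_of_injective (f := φ) ?_
      intro x y hxy
      have h3 : (∏ i, nn i) • (x : A) = (∏ i, nn i) • (y : A) := congrArg Subtype.val hxy
      rw [← natCast_zsmul, ← natCast_zsmul] at h3
      exact Subtype.ext (smul_right_injective A (by exact_mod_cast hD0 : ((∏ i, nn i : ℕ) : ℤ) ≠ 0) h3)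
    have h2 := rk_null f2
    have h3 := Submodule.finrank_quotient_add_finrank P
    omega
  · intro m hm
    have : P.mkQ m = 0 := by simpa using hMP hm
    rw [LinearMap.comp_apply, this, map_zero]
  · exact Subtype.val_injective.comp e1.symm.injective
  · intro a
    change v a = ((e1.symm (e1 (f2r (P.mkQ a))) : LinearMap.range f2) : Fin l → ℤ)
    rw [e1.symm_apply_apply]
    rfl
  · exact Nat.one_le_iff_ne_zero.2 hD0
  · intro a ha
    have h0 : e1 (f2r (P.mkQ a)) = 0 ∧ e2 (k2 (P.mkQ a)) = 0 := Prod.mk.injEq .. ▸ ha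
    have h1 : f2r (P.mkQ a) = 0 := by simpa using h0.1
    have h2 : k2 (P.mkQ a) = 0 := by simpa using h0.2
    have h3 : P.mkQ a = 0 := by
      have h4 : P.mkQ a - σ2 (f2r (P.mkQ a)) = 0 := congrArg Subtype.val h2
      rwa [h1, map_zero, sub_zero] at h4
    have h5 : (κ0 a : A) = a := by
      change a - σ (P.mkQ a) = a
      rw [h3, map_zero, sub_zero]
    have h6 := congrArg Subtype.val (bP.sum_equivFun (κ0 a))
    rw [h5] at h6
    refine h6.symm.trans ?_
    rw [Submodule.coe_sum]
    rfl

lemma lat_inv {r l : ℕ} (B : (Fin r → ℤ) →ₗ[ℤ] (Fin l → ℤ)) (hB : Function.Injective B) :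
    ∃ (m : ℕ) (B' : (Fin l → ℤ) →ₗ[ℤ] (Fin r → ℤ)), 1 ≤ m ∧ (∀ s, B' (B s) = m • s) ∧
      ∀ τ : Fin l → ℤ, (∃ s0, m • τ = B s0) ∨
        ∃ F : (Fin l → ℤ) →ₗ[ℤ] ℤ, (∀ s, F (B s) = 0) ∧ F τ ≠ 0 := by
  obtain ⟨r', t', ρ, p, -, D, f, κ, -, -, h1, -, -, hD, h2, h3⟩ :=
    lattice (LinearMap.range B) (l := 0) 0 (by simp)
  choose w hw using h3
  have key : ∀ a, p a = 0 → D • a = B (∑ i, κ a i • w i) := by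
    intro a ha
    conv_lhs => rw [h2 a ha]
    rw [map_sum, Finset.smul_sum]
    refine Finset.sum_congr rfl fun i _ => ?_
    rw [map_smul, hw, smul_comm]
  refine ⟨D, (∑ i, (LinearMap.proj i ∘ₗ κ).smulRight (w i)), hD, ?_, ?_⟩
  · intro s
    apply hB
    have := key (B s) (h1 _ ⟨s, rfl⟩)
    rw [map_nsmul, this]
    simp
  · intro τ
    by_cases hτ : p τ = 0
    · exact Or.inl ⟨_, key τ hτ⟩
    · right
      by_cases h : (p τ).1 = 0
      · have h' : (p τ).2 ≠ 0 := fun h' => hτ (Prod.ext h h')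
        obtain ⟨i, hi⟩ := Function.ne_iff.1 h'
        exact ⟨LinearMap.proj i ∘ₗ LinearMap.snd ℤ _ _ ∘ₗ p, fun s => by simp [h1 (B s) ⟨s, rfl⟩], hi⟩
      · obtain ⟨i, hi⟩ := Function.ne_iff.1 h
        exact ⟨LinearMap.proj i ∘ₗ LinearMap.fst ℤ _ _ ∘ₗ p, fun s => by simp [h1 (B s) ⟨s, rfl⟩], hi⟩

/-- quotient by torsion preserves the rank -/
lemma finrank_map_of_torsion {A A' : Type*} [AddCommGroup A] [AddCommGroup A'] [Module.Finite ℤ A]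
    (f : A →ₗ[ℤ] A') (hf : ∀ a, f a = 0 → ∃ n : ℕ, n ≠ 0 ∧ n • a = 0) :
    Module.finrank ℤ (LinearMap.range f) = Module.finrank ℤ A := by
  have h := rk_null f
  have h0 : Module.finrank ℤ (LinearMap.ker f) = 0 := by
    rw [Module.finrank_eq_zero_iff]
    intro x
    obtain ⟨n, hn, h⟩ := hf x.1 x.2
    exact ⟨n, by exact_mod_cast hn, Subtype.ext (by simpa using h)⟩
  omega

end

section
/-- central extension data: `z` central of infinite order, `π : G → A` surjective additive with
kernel the powers of `z` -/
structure HS {G : Type*} [Group G] {A : Type*} [AddCommGroup A] (π : G → A) (z : G) : Prop where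
  add : ∀ g h, π (g * h) = π g + π h
  surj : Function.Surjective π
  ker : ∀ g, π g = 0 ↔ ∃ i : ℤ, g = z ^ i
  cen : ∀ g, g * z = z * g
  inf : ∀ i : ℤ, z ^ i = 1 → i = 0

namespace HS
variable {G : Type*} [Group G] {A : Type*} [AddCommGroup A] {π : G → A} {z : G}

lemma pi_one (H : HS π z) : π 1 = 0 := by simpa using H.add 1 1

lemma pi_inv (H : HS π z) (g : G) : π g⁻¹ = - π g := by
  have := H.add g g⁻¹
  rw [mul_inv_cancel, H.pi_one] at this
  exact (neg_eq_of_add_eq_zero_right this.symm).symm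

/-- `π` as a homomorphism -/
def hom (H : HS π z) : G →* Multiplicative A where
  toFun g := Multiplicative.ofAdd (π g)
  map_one' := by rw [H.pi_one]; rfl
  map_mul' g h := by rw [H.add]; rfl

lemma pi_zpow (H : HS π z) (g : G) (i : ℤ) : π (g ^ i) = i • π g := by
  have := map_zpow H.hom g i
  exact congrArg Multiplicative.toAdd this

lemma pi_z (H : HS π z) (i : ℤ) : π (z ^ i) = 0 := (H.ker _).2 ⟨i, rfl⟩

lemma pi_mul_z (H : HS π z) (g : G) (i : ℤ) : π (g * z ^ i) = π g := by
  rw [H.add, H.pi_z, add_zero]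

lemma zc (H : HS π z) (g : G) (i : ℤ) : g * z ^ i = z ^ i * g := by
  have h : Commute g z := H.cen g
  exact h.zpow_right i

lemma zinj (H : HS π z) {i j : ℤ} (h : z ^ i = z ^ j) : i = j := by
  have := H.inf (i - j) (by rw [zpow_sub, h, mul_inv_cancel])
  omega

lemma eq_mul (H : HS π z) {g h : G} (e : π g = π h) : ∃ i : ℤ, g = h * z ^ i := by
  obtain ⟨i, hi⟩ := (H.ker (h⁻¹ * g)).1 (by rw [H.add, H.pi_inv, e, neg_add_cancel])
  exact ⟨i, by rw [← hi]; simp⟩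

lemma om_ex (H : HS π z) (g h : G) : ∃ i : ℤ, g * h = h * g * z ^ i :=
  H.eq_mul (by rw [H.add, H.add, add_comm])

/-- commutator form -/
noncomputable def om (H : HS π z) (g h : G) : ℤ := (H.om_ex g h).choose

lemma om_spec (H : HS π z) (g h : G) : g * h = h * g * z ^ (H.om g h) := (H.om_ex g h).choose_spec

lemma om_uniq (H : HS π z) {g h : G} {i : ℤ} (e : g * h = h * g * z ^ i) : H.om g h = i := by
  apply H.zinj
  rw [H.om_spec g h] at e
  exact mul_left_cancel e

lemma om_add_left (H : HS π z) (g g' h : G) : H.om (g * g') h = H.om g h + H.om g' h := by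
  apply H.om_uniq
  rw [mul_assoc, H.om_spec g' h, ← mul_assoc, ← mul_assoc, H.om_spec g h, mul_assoc _ _ g', ← H.zc g',
    zpow_add]
  simp only [mul_assoc]

lemma om_swap (H : HS π z) (g h : G) : H.om h g = - H.om g h := by
  apply H.om_uniq
  rw [H.om_spec g h, zpow_neg, mul_inv_cancel_right]

lemma om_add_right (H : HS π z) (g h h' : G) : H.om g (h * h') = H.om g h + H.om g h' := by
  rw [H.om_swap, H.om_add_left, H.om_swap g h, H.om_swap g h']; ring

lemma om_z_left (H : HS π z) (i : ℤ) (g : G) : H.om (z ^ i) g = 0 :=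
  H.om_uniq (by rw [zpow_zero, mul_one, H.zc])

lemma om_z_right (H : HS π z) (i : ℤ) (g : G) : H.om g (z ^ i) = 0 :=
  H.om_uniq (by rw [H.zc]; simp)

lemma om_congr_left (H : HS π z) {g g' : G} (h : G) (e : π g = π g') : H.om g h = H.om g' h := by
  obtain ⟨i, rfl⟩ := H.eq_mul e
  rw [H.om_add_left, H.om_z_left, add_zero]

lemma om_congr_right (H : HS π z) {g g' : G} (h : G) (e : π g = π g') : H.om h g = H.om h g' := by
  rw [H.om_swap, H.om_congr_left h e, ← H.om_swap]

lemma om_one_right (H : HS π z) (g : G) : H.om g 1 = 0 := by simpa using H.om_z_right 0 g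

/-- commutator form with fixed left entry as hom on the quotient -/
noncomputable def omL (H : HS π z) (g : G) : A →ₗ[ℤ] ℤ :=
  AddMonoidHom.toIntLinearMap
    { toFun := fun a => H.om g (H.surj a).choose
      map_zero' := by
        rw [← H.om_one_right g]
        exact H.om_congr_right g ((H.surj 0).choose_spec.trans H.pi_one.symm)
      map_add' := fun a b => by
        rw [← H.om_add_right]
        apply H.om_congr_right
        rw [H.add, (H.surj _).choose_spec, (H.surj _).choose_spec, (H.surj _).choose_spec] }

lemma omL_apply (H : HS π z) (g h : G) : H.omL g (π h) = H.om g h :=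
  H.om_congr_right g (H.surj (π h)).choose_spec

lemma om_zpow_right (H : HS π z) (g h : G) (i : ℤ) : H.om g (h ^ i) = i * H.om g h := by
  rw [← H.omL_apply, H.pi_zpow, map_smul, H.omL_apply]; rfl

lemma om_zpow_left (H : HS π z) (g h : G) (i : ℤ) : H.om (g ^ i) h = i * H.om g h := by
  rw [H.om_swap, H.om_zpow_right, H.om_swap h g]; ring

/-- ordered product -/
def PP : (d : ℕ) → (Fin d → G) → G
  | 0, _ => 1
  | d + 1, u => u 0 * PP d (fun i => u i.succ)

lemma PP_one (d : ℕ) : PP d (fun _ => (1 : G)) = 1 := by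
  induction d with
  | zero => rfl
  | succ d ih => rw [PP, ih, mul_one]

lemma pi_PP (H : HS π z) (d : ℕ) (u : Fin d → G) : π (PP d u) = ∑ i, π (u i) := by
  induction d with
  | zero => simpa [PP] using H.pi_one
  | succ d ih => rw [PP, H.add, ih, Fin.sum_univ_succ]

lemma om_PP (H : HS π z) (K : ℤ) (d : ℕ) (u : Fin d → G) (v : G) (h : ∀ i, |H.om (u i) v| ≤ K) :
    |H.om (PP d u) v| ≤ d * K := by
  induction d with
  | zero => simp [PP, show H.om 1 v = 0 by simpa using H.om_z_left 0 v]
  | succ d ih =>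
    rw [PP, H.om_add_left]
    have h1 := ih (fun i => u i.succ) (fun i => h _)
    have h2 := abs_add_le (H.om (u 0) v) (H.om (PP d fun i => u i.succ) v)
    have h3 := h 0
    push_cast
    linarith

lemma PP_mul (H : HS π z) (K : ℤ) (hK : 0 ≤ K) (d : ℕ) (u v : Fin d → G)
    (h : ∀ i j, |H.om (u i) (v j)| ≤ K) :
    ∃ t : ℤ, |t| ≤ d ^ 2 * K ∧ PP d u * PP d v = PP d (fun i => u i * v i) * z ^ t := by
  induction d with
  | zero => exact ⟨0, by simp, by simp [PP]⟩
  | succ d ih =>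
    obtain ⟨t, ht, e⟩ := ih (fun i => u i.succ) (fun i => v i.succ) (fun i j => h _ _)
    have h1 := H.om_PP K d (fun i => u i.succ) (v 0) (fun i => h _ _)
    refine ⟨t + H.om (PP d (fun i => u i.succ)) (v 0), ?_, ?_⟩
    · refine (abs_add_le _ _).trans ?_
      have : (d : ℤ) * K ≤ 2 * d * K + K := by nlinarith [mul_nonneg (Nat.cast_nonneg (α := ℤ) d) hK]
      push_cast
      nlinarith
    · simp only [PP]
      set U := PP d (fun i => u i.succ)
      set V := PP d (fun i => v i.succ)
      calc u 0 * U * (v 0 * V) = u 0 * (U * v 0) * V := by simp only [mul_assoc]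
        _ = u 0 * v 0 * (U * (z ^ (H.om U (v 0)) * V)) := by rw [H.om_spec U (v 0)]; simp only [mul_assoc]
        _ = u 0 * v 0 * ((U * V) * z ^ (H.om U (v 0))) := by rw [← H.zc V]; simp only [mul_assoc]
        _ = _ := by rw [e, zpow_add]; simp only [mul_assoc]

theorem upper (H : HS π z) {S : Finset G} [Module.Free ℤ A] [Module.Finite ℤ A] :
    ∃ C : ℕ, ∀ (n : ℕ) (i : ℤ), InB S n (z ^ i) → |i| ≤ C * (n : ℤ) ^ 2 := by
  classical
  let b := Module.finBasis ℤ A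
  set d := Module.finrank ℤ A
  choose e he using fun i => H.surj (b i)
  let s : (Fin d → ℤ) → G := fun a => PP d (fun i => e i ^ a i)
  have hs : ∀ a, π (s a) = ∑ i, a i • b i := by
    intro a
    rw [H.pi_PP]
    simp only [H.pi_zpow, he]
  let co : G → Fin d → ℤ := fun g i => b.repr (π g) i
  have hco : ∀ g, π g = π (s (co g)) := fun g => by
    rw [hs]; exact (b.sum_repr (π g)).symm
  choose φ hφ using fun g => H.eq_mul (hco g)
  have hcoadd : ∀ g h, co (g * h) = co g + co h := by
    intro g h; ext i; simp [co, H.add]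
  obtain ⟨C1, hC1⟩ := exists_unif (ι := Fin d) (P := fun i C => ∀ n g, InB S n g → |co g i| ≤ C * n)
    (fun i n m h h' k g hg => (h' k g hg).trans
      (mul_le_mul_of_nonneg_right (by exact_mod_cast h) (by positivity)))
    (fun i => add_lip (fun g => co g i) (fun g h => by rw [hcoadd]; rfl))
  obtain ⟨W, hW⟩ := exists_unif (ι := Fin d × Fin d) (P := fun i C => |H.om (e i.1) (e i.2)| ≤ (C : ℤ))
    (fun i n m h h' => h'.trans (by exact_mod_cast h))
    (fun i => ⟨(H.om (e i.1) (e i.2)).natAbs, by simp⟩)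
  obtain ⟨C2, hC2⟩ := exists_unif (ι := S) (P := fun i C => |φ i| ≤ (C : ℤ) ∧ |φ (i : G)⁻¹| ≤ (C : ℤ))
    (fun i n m h h' => ⟨h'.1.trans (by exact_mod_cast h), h'.2.trans (by exact_mod_cast h)⟩)
    (fun i => ⟨(φ i).natAbs + (φ (i : G)⁻¹).natAbs, by constructor <;> (push_cast; simp)⟩)
  have hstep : ∀ g x, ∀ n m : ℕ, InB S n g → InB S m x →
      |φ (g * x)| ≤ |φ g| + |φ x| + d ^ 2 * ((C1 * n) * (C1 * m) * W) := by
    intro g x n m hg hx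
    obtain ⟨t, ht, e1⟩ := H.PP_mul ((C1 * n) * (C1 * m) * W) (by positivity) d
      (fun i => e i ^ co g i) (fun i => e i ^ co x i) (by
        intro i j
        rw [H.om_zpow_left, H.om_zpow_right, ← mul_assoc, abs_mul, abs_mul]
        have h1 := hC1 i n g hg
        have h2 := hC1 j m x hx
        have h3 := hW (i, j)
        simp only at h3
        gcongr)
    have e2 : φ (g * x) = t + φ g + φ x := by
      apply H.zinj
      apply mul_left_cancel (a := s (co (g * x)))
      rw [← hφ]
      have e3 : s (co (g * x)) = PP d (fun i => e i ^ co g i * e i ^ co x i) := by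
        simp only [s, hcoadd, Pi.add_apply, zpow_add]
      rw [e3]
      conv_lhs => rw [hφ g, hφ x]
      change PP d (fun i => e i ^ co g i) * z ^ φ g * (PP d (fun i => e i ^ co x i) * z ^ φ x) = _
      rw [mul_assoc, ← mul_assoc (z ^ φ g), ← H.zc, zpow_add, zpow_add, ← mul_assoc, ← mul_assoc, e1]
      simp only [mul_assoc]
    rw [e2]
    have h1 := abs_add_le (t + φ g) (φ x)
    have h2 := abs_add_le t (φ g)
    linarith
  have hone : φ 1 = 0 := by
    apply H.zinj
    have h := hφ 1
    have : co 1 = 0 := by ext i; simp [co, H.pi_one]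
    rw [this] at h
    have h0 : s 0 = 1 := by simp [s, PP_one]
    rw [h0, one_mul] at h
    rw [← h, zpow_zero]
  refine ⟨d ^ 2 * C1 ^ 2 * W + C2, fun n i hi => ?_⟩
  have main : |φ (z ^ i)| ≤ ((d ^ 2 * C1 ^ 2 * W + C2 : ℕ) : ℤ) * (n : ℤ) ^ 2 := by
    refine InB.ind (P := fun n g => |φ g| ≤ ((d ^ 2 * C1 ^ 2 * W + C2 : ℕ) : ℤ) * (n : ℤ) ^ 2) ?_ ?_ hi
    · intro n; rw [hone, abs_zero]; positivity
    · intro n g x hg ih hx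
      have hx1 : InB S 1 x := by
        rcases hx with hx | hx
        · exact InB.gen hx
        · simpa using (InB.gen hx).inv
      have hx2 : |φ x| ≤ C2 := by
        rcases hx with hx | hx
        · exact (hC2 ⟨x, hx⟩).1
        · simpa using (hC2 ⟨_, hx⟩).2
      have h1 := hstep g x n 1 hg hx1
      push_cast at *
      have : (0 : ℤ) ≤ d ^ 2 * C1 ^ 2 * W * n := by positivity
      have : (0 : ℤ) ≤ d ^ 2 * C1 ^ 2 * W := by positivity
      have : (0 : ℤ) ≤ (C2 : ℤ) * n := by positivity
      nlinarith
  have : φ (z ^ i) = i := by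
    apply H.zinj
    have h := hφ (z ^ i)
    have h' : co (z ^ i) = 0 := by ext j; simp [co, H.pi_z]
    rw [h'] at h
    have h0 : s 0 = 1 := by simp [s, PP_one]
    rw [h0, one_mul] at h
    exact h.symm
  rwa [this] at main

end HS

end

section
namespace HS
variable {G : Type*} [Group G] {A : Type*} [AddCommGroup A] {π : G → A} {z : G}

lemma comm_zpow (H : HS π z) (x y : G) (a b : ℤ) :
    z ^ (a * b * H.om x y) = (y ^ b * x ^ a)⁻¹ * (x ^ a * y ^ b) := by
  rw [H.om_spec (x ^ a) (y ^ b), H.om_zpow_left, H.om_zpow_right, inv_mul_cancel_left, mul_assoc]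

theorem zball (H : HS π z) {S : Finset G} (hgen : Subgroup.closure (S : Set G) = ⊤)
    (hnc : ∃ x y : G, x * y ≠ y * x) :
    ∃ C : ℕ, ∀ (n : ℕ) (i : ℤ), 1 ≤ n → |i| ≤ (n : ℤ) ^ 2 → InB S (C * n) (z ^ i) := by
  have h1 : ∃ x y, 0 < H.om x y := by
    obtain ⟨x, y, hxy⟩ := hnc
    rcases lt_trichotomy (H.om x y) 0 with h | h | h
    · exact ⟨y, x, by rw [H.om_swap]; omega⟩
    · exact absurd (by rw [H.om_spec x y, h]; simp) hxy
    · exact ⟨x, y, h⟩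
  obtain ⟨x, y, ht⟩ := h1
  obtain ⟨mx, hmx⟩ := InB.ex hgen x
  obtain ⟨my, hmy⟩ := InB.ex hgen y
  obtain ⟨mz, hmz⟩ := InB.ex hgen z
  set m := mx + my + mz
  replace hmx := hmx.mono (by omega : mx ≤ m)
  replace hmy := hmy.mono (by omega : my ≤ m)
  replace hmz := hmz.mono (by omega : mz ≤ m)
  set t := H.om x y with htd
  have hcomm : ∀ (n : ℕ) (a b : ℤ), a.natAbs ≤ n → b.natAbs ≤ n → InB S (4 * m * n) (z ^ (a * b * t)) := by
    intro n a b ha hb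
    rw [H.comm_zpow]
    have ha' := (hmx.zpow a).mono (Nat.mul_le_mul_left m ha)
    have hb' := (hmy.zpow b).mono (Nat.mul_le_mul_left m hb)
    exact ((hb'.mul ha').inv.mul (ha'.mul hb')).mono (by nlinarith)
  refine ⟨8 * m + m * t.natAbs, fun n i hn hi => ?_⟩
  have hn' : (1 : ℤ) ≤ n := by exact_mod_cast hn
  obtain ⟨hi1, hi2⟩ := abs_le.1 hi
  set q := i / t with hq
  have hq1 : -(n : ℤ) ^ 2 ≤ q := by
    rw [hq, Int.le_ediv_iff_mul_le ht]; nlinarith [sq_nonneg (n : ℤ)]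
  have hq2 : q ≤ (n : ℤ) ^ 2 := by
    rw [hq]
    refine Int.ediv_le_of_le_mul ht ?_
    nlinarith [sq_nonneg (n : ℤ)]
  have hqn1 : -(n : ℤ) ≤ q / n := by
    rw [Int.le_ediv_iff_mul_le (by omega)]; nlinarith
  have hqn2 : q / n ≤ (n : ℤ) := Int.ediv_le_of_le_mul (by omega) (by nlinarith)
  have hr1 := Int.emod_nonneg q (by omega : (n : ℤ) ≠ 0)
  have hr2 := Int.emod_lt_of_pos q (by omega : 0 < (n : ℤ))
  have hs1 := Int.emod_nonneg i ht.ne'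
  have hs2 := Int.emod_lt_of_pos i ht
  have e : i = (n : ℤ) * (q / n) * t + 1 * (q % n) * t + i % t := by
    have e1 := Int.mul_ediv_add_emod q n
    have e2 := Int.mul_ediv_add_emod i t
    rw [← hq] at e2
    nlinarith
  rw [e, zpow_add, zpow_add]
  have f1 := hcomm n n (q / n) (by omega) (by omega)
  have f2 := hcomm n 1 (q % n) (by omega) (by omega)
  have f3 := (hmz.zpow (i % t)).mono (Nat.mul_le_mul_left m (by omega : (i % t).natAbs ≤ t.natAbs))
  refine ((f1.mul f2).mul f3).mono ?_
  have : m * t.natAbs ≤ m * t.natAbs * n := Nat.le_mul_of_pos_right _ hn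
  nlinarith

lemma zmv (H : HS π z) (a b : G) (i : ℤ) : a * z ^ i * b = a * b * z ^ i := by
  rw [mul_assoc, ← H.zc, mul_assoc]

lemma tw_mul (H : HS π z) (ψ : G ≃* G) {x g h : G} {i j : ℤ} (hg : g * x * (ψ g)⁻¹ = x * z ^ i)
    (hh : h * x * (ψ h)⁻¹ = x * z ^ j) : g * h * x * (ψ (g * h))⁻¹ = x * z ^ (i + j) := by
  calc g * h * x * (ψ (g * h))⁻¹ = g * (h * x * (ψ h)⁻¹) * (ψ g)⁻¹ := by simp [mul_assoc]
    _ = (g * x * (ψ g)⁻¹) * z ^ j := by rw [hh, ← mul_assoc, H.zmv]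
    _ = _ := by rw [hg, zpow_add, mul_assoc]

lemma tw_inv (H : HS π z) (ψ : G ≃* G) {x g : G} {i : ℤ} (hg : g * x * (ψ g)⁻¹ = x * z ^ i) :
    g⁻¹ * x * (ψ g⁻¹)⁻¹ = x * z ^ (-i) := by
  have : x = g⁻¹ * (x * z ^ i) * ψ g := by rw [← hg]; simp [mul_assoc]
  rw [zpow_neg, eq_mul_inv_iff_mul_eq]
  conv_rhs => rw [this]
  rw [map_inv, inv_inv, ← mul_assoc g⁻¹, H.zmv]

lemma tw_key (H : HS π z) {g w : G} (x : G) {i : ℤ} (h : g = w * z ^ i) :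
    g * x * w⁻¹ = x * z ^ (i + H.om g x) := by
  rw [H.om_spec g x, H.zmv, zpow_add, ← mul_assoc]
  congr 1
  conv_lhs => rw [h]
  rw [← mul_assoc, H.zmv, mul_inv_cancel_right]

/-- the subgroup of elements twisting `x` by `z ^ i` with `e ∣ N * i` -/
def Lsub (H : HS π z) (ψ : G ≃* G) (x : G) (e N : ℤ) : Subgroup G where
  carrier := {g | ∃ i : ℤ, g * x * (ψ g)⁻¹ = x * z ^ i ∧ e ∣ N * i}
  one_mem' := ⟨0, by simp, by simp⟩
  mul_mem' := by
    rintro g h ⟨i, hi, di⟩ ⟨j, hj, dj⟩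
    exact ⟨i + j, H.tw_mul ψ hi hj, by rw [mul_add]; exact dvd_add di dj⟩
  inv_mem' := by
    rintro g ⟨i, hi, di⟩
    exact ⟨-i, H.tw_inv ψ hi, by rw [mul_neg]; exact (dvd_neg).2 di⟩

lemma c_ex (H : HS π z) (ψ : G ≃* G) :
    ∃ c : G → ℕ, ∀ x (i : ℤ), TwistedConj ψ x (x * z ^ i) ↔ (c x : ℤ) ∣ i := by
  have : ∀ x, ∃ c : ℕ, ∀ i : ℤ, TwistedConj ψ x (x * z ^ i) ↔ (c : ℤ) ∣ i := by
    intro x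
    let K : AddSubgroup ℤ :=
      { carrier := {i | TwistedConj ψ x (x * z ^ i)}
        zero_mem' := by simpa using tc_refl ψ x
        add_mem' := by
          rintro i j ⟨g, hg⟩ ⟨h, hh⟩
          exact ⟨g * h, H.tw_mul ψ hg hh⟩
        neg_mem' := by
          rintro i ⟨g, hg⟩
          exact ⟨g⁻¹, H.tw_inv ψ hg⟩ }
    obtain ⟨a, ha⟩ := Int.subgroup_cyclic K
    refine ⟨a.natAbs, fun i => ?_⟩
    rw [Int.natAbs_dvd]
    change i ∈ K ↔ _
    rw [ha, AddSubgroup.mem_closure_singleton]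
    constructor
    · rintro ⟨n, rfl⟩; exact ⟨n, by simp [mul_comm]⟩
    · rintro ⟨n, rfl⟩; exact ⟨n, by simp [mul_comm]⟩
  choose c hc using this
  exact ⟨c, hc⟩

lemma c_h1 (H : HS π z) (ψ : G ≃* G) {c : G → ℕ}
    (hc : ∀ x (i : ℤ), TwistedConj ψ x (x * z ^ i) ↔ (c x : ℤ) ∣ i) (x : G) (i j : ℤ) :
    TwistedConj ψ (x * z ^ i) (x * z ^ j) ↔ (c x : ℤ) ∣ i - j := by
  rw [← dvd_neg, neg_sub, ← hc]
  refine exists_congr fun g => ?_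
  have : g * (x * z ^ i) * (ψ g)⁻¹ = g * x * (ψ g)⁻¹ * z ^ i := by
    rw [← mul_assoc, mul_assoc (g * x), ← H.zc, ← mul_assoc]
  rw [this, zpow_sub, ← mul_assoc, eq_mul_inv_iff_mul_eq]

/-- generators of the twisted centraliser -/
lemma gens (H : HS π z) (ψ : G ≃* G) [Module.Finite ℤ A] (hψ : ψ z = z) {c : G → ℕ}
    (hc : ∀ x (i : ℤ), TwistedConj ψ x (x * z ^ i) ↔ (c x : ℤ) ∣ i) :
    ∃ (l : ℕ) (τ : Fin l → ℤ) (v : A →ₗ[ℤ] (Fin l → ℤ)), (∀ g, v (π g) = v (π (ψ g))) ∧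
      (∀ x i, (c x : ℤ) ∣ τ i + v (π x) i) ∧
      (∀ x (e N : ℤ), (∀ i, e ∣ N * (τ i + v (π x) i)) → e ∣ N * c x) := by
  have hpz : ∀ i : ℤ, ψ (z ^ i) = z ^ i := fun i => by rw [map_zpow, hψ]
  let K : Submodule ℤ A := AddSubgroup.toIntSubmodule
    { carrier := {a | ∃ g, π g = a ∧ π g = π (ψ g)}
      zero_mem' := ⟨1, H.pi_one, by simp⟩
      add_mem' := by
        rintro _ _ ⟨g, rfl, hg⟩ ⟨h, rfl, hh⟩
        exact ⟨g * h, H.add _ _, by rw [map_mul, H.add, H.add, hg, hh]⟩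
      neg_mem' := by
        rintro _ ⟨g, rfl, hg⟩
        exact ⟨g⁻¹, H.pi_inv _, by rw [map_inv, H.pi_inv, H.pi_inv, hg]⟩ }
  have hK : K.FG := IsNoetherian.noetherian K
  obtain ⟨l, a, ha⟩ := Submodule.fg_iff_exists_fin_generating_family.1 hK
  have ha' : ∀ i, ∃ g, π g = a i ∧ π g = π (ψ g) := fun i => by
    have : a i ∈ K := ha ▸ Submodule.subset_span ⟨i, rfl⟩
    exact this
  choose k hk1 hk2 using ha'
  choose τ hτ using fun i => H.eq_mul (hk2 i)
  have hkey : ∀ x i, k i * x * (ψ (k i))⁻¹ = x * z ^ (τ i + H.om (k i) x) :=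
    fun x i => H.tw_key x (hτ i)
  refine ⟨l, τ, LinearMap.pi fun i => H.omL (k i), ?_, ?_, ?_⟩
  · intro g
    ext i
    simp only [LinearMap.pi_apply, H.omL_apply]
    rw [H.om_congr_left (ψ g) (hk2 i)]
    symm
    apply H.om_uniq
    rw [← map_mul, H.om_spec (k i) g, map_mul, map_mul, hpz]
  · intro x i
    simp only [LinearMap.pi_apply, H.omL_apply]
    exact (hc _ _).1 ⟨k i, hkey x i⟩
  · intro x e N h
    simp only [LinearMap.pi_apply, H.omL_apply] at h
    obtain ⟨g, hg⟩ := (hc x (c x)).2 dvd_rfl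
    have hgK : π g ∈ K := by
      refine ⟨g, rfl, ?_⟩
      have := congrArg π hg
      rw [H.add, H.add, H.pi_mul_z, H.pi_inv] at this
      rw [← sub_eq_zero, show π g - π (ψ g) = (π g + π x + -π (ψ g)) - π x by abel, this, sub_self]
    let L' : Submodule ℤ A := AddSubgroup.toIntSubmodule
      { carrier := {a | ∃ g ∈ H.Lsub ψ x e N, π g = a}
        zero_mem' := ⟨1, one_mem _, H.pi_one⟩
        add_mem' := by
          rintro _ _ ⟨g, hg, rfl⟩ ⟨h, hh, rfl⟩
          exact ⟨g * h, mul_mem hg hh, H.add _ _⟩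
        neg_mem' := by
          rintro _ ⟨g, hg, rfl⟩
          exact ⟨g⁻¹, inv_mem hg, H.pi_inv _⟩ }
    have hL : K ≤ L' := by
      rw [← ha, Submodule.span_le]
      rintro _ ⟨i, rfl⟩
      exact ⟨k i, ⟨_, hkey x i, h i⟩, hk1 i⟩
    obtain ⟨g', hg', e'⟩ := hL hgK
    obtain ⟨j, hj⟩ := H.eq_mul e'.symm
    have hzj : z ^ j ∈ H.Lsub ψ x e N := ⟨0, by rw [hpz, ← H.zc]; simp, by simp⟩
    obtain ⟨i, hi, di⟩ : g ∈ H.Lsub ψ x e N := hj ▸ mul_mem hg' hzj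
    have : (c x : ℤ) = i := H.zinj (mul_left_cancel (hg.symm.trans hi))
    rw [this]; exact di

end HS

end

section
lemma box_mono (r : ℕ) {n m : ℕ} (h : n ≤ m) {s : Fin r → ℤ} (hs : s ∈ box r n) : s ∈ box r m := by
  rw [mem_box] at *
  exact fun i => (hs i).trans (by exact_mod_cast h)

lemma vec_dvd {l : ℕ} {e : ℤ} {x : Fin l → ℤ} (h : ∀ i, e ∣ x i) : ∃ y : Fin l → ℤ, x = e • y := by
  choose y hy using h
  exact ⟨y, funext fun i => by simp [hy i]⟩

lemma gv_smul {r : ℕ} (m : ℕ) (w : Fin r → ℤ) : gv (m • w) = m * gv w := by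
  have : gv (m • w) = Finset.univ.gcd (fun i => m * (w i).natAbs) := by
    simp [gv, Int.natAbs_mul]
  rw [this, Finset.gcd_mul_left]
  simp [gv]

lemma le_of_dvds {a b m K : ℕ} (hm : 1 ≤ m) (hK : m ≤ K) (h1 : a ∣ m * b) (h2 : b ∣ m * a) : a ≤ K * b := by
  rcases Nat.eq_zero_or_pos b with hb | hb
  · subst hb
    have := Nat.eq_zero_of_zero_dvd h2
    rcases Nat.mul_eq_zero.1 this with h | h <;> omega
  · exact (Nat.le_of_dvd (Nat.mul_pos hm hb) h1).trans (Nat.mul_le_mul_right _ hK)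

namespace HS
variable {G : Type*} [Group G] {A : Type*} [AddCommGroup A] {π : G → A} {z : G}

lemma lin_lip (H : HS π z) {S : Finset G} {r : ℕ} (p : A →ₗ[ℤ] (Fin r → ℤ)) :
    ∃ C : ℕ, ∀ n g, InB S n g → p (π g) ∈ box r (C * n) := by
  obtain ⟨C, hC⟩ := exists_unif (ι := Fin r) (P := fun i C => ∀ n g, InB S n g → |p (π g) i| ≤ C * n)
    (fun i n m h h' k g hg => (h' k g hg).trans
      (mul_le_mul_of_nonneg_right (by exact_mod_cast h) (by positivity)))
    (fun i => add_lip (fun g => p (π g) i) (fun g h => by rw [H.add, map_add]; rfl))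
  refine ⟨C, fun n g hg => ?_⟩
  rw [mem_box]
  intro i
  push_cast
  exact hC i n g hg

lemma lift_box (H : HS π z) {S : Finset G} (hgen : Subgroup.closure (S : Set G) = ⊤) {r t : ℕ}
    (p : A →ₗ[ℤ] (Fin r → ℤ) × (Fin t → ℤ)) (hp : Function.Surjective p) :
    ∃ C : ℕ, ∀ n, ∀ u : (Fin r → ℤ) × (Fin t → ℤ), u.1 ∈ box r n → u.2 ∈ box t n →
      ∃ x, p (π x) = u ∧ InB S (C * n) x := by
  classical
  have hs : ∀ u, ∃ x, p (π x) = u := fun u => by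
    obtain ⟨a, rfl⟩ := hp u
    obtain ⟨x, rfl⟩ := H.surj a
    exact ⟨x, rfl⟩
  choose X hX using hs
  obtain ⟨C, hC⟩ := prod_lift hgen π H.add (ι := Fin r ⊕ Fin t)
    (Sum.elim (fun i => X (Pi.single i 1, 0)) (fun i => X (0, Pi.single i 1)))
  refine ⟨C, fun n u h1 h2 => ?_⟩
  rw [mem_box] at h1 h2
  obtain ⟨w, hw, e⟩ := hC n (Sum.elim u.1 u.2) (by rintro (i | i) <;> simp [h1, h2])
  refine ⟨w, ?_, hw⟩
  rw [e, map_sum]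
  simp only [map_smul, Fintype.sum_sum_type, Sum.elim_inl, Sum.elim_inr, hX]
  ext i
  · simp only [Prod.fst_add, Prod.fst_sum, Pi.add_apply, Finset.sum_apply, Prod.smul_fst, Pi.smul_apply]
    simp [Pi.single_apply]
  · simp only [Prod.snd_add, Prod.snd_sum, Pi.add_apply, Finset.sum_apply, Prod.smul_snd, Pi.smul_apply]
    simp [Pi.single_apply]

theorem reps (H : HS π z) (ψ : G ≃* G) {S : Finset G} (hgen : Subgroup.closure (S : Set G) = ⊤)
    [Module.Free ℤ A] [Module.Finite ℤ A] (M : Submodule ℤ A)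
    (hM : ∀ m ∈ M, ∃ g, m = π g - π (ψ g)) {r t ρ : ℕ}
    (p : A →ₗ[ℤ] (Fin r → ℤ) × (Fin t → ℤ)) (D : ℕ) (f : Fin ρ → A) (κ : A →ₗ[ℤ] (Fin ρ → ℤ))
    (hp : Function.Surjective p) (hpM : ∀ m ∈ M, p m = 0) (hD : 1 ≤ D)
    (hκ : ∀ a, p a = 0 → a = ∑ i, κ a i • f i) (hf : ∀ i, D • f i ∈ M) :
    ∃ C T : ℕ, ∀ n : ℕ, 1 ≤ n → ∀ u, ∃ R : Finset G, R.card ≤ T ∧ (∀ x ∈ R, p (π x) = u) ∧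
      ∀ g, InB S n g → p (π g) = u →
        ∃ x ∈ R, ∃ j : ℤ, |j| ≤ C * (n : ℤ) ^ 2 ∧ TwistedConj ψ g (x * z ^ j) := by
  classical
  obtain ⟨C4, h4⟩ := H.lift_box hgen p hp
  obtain ⟨C31, h31⟩ := H.lin_lip (S := S) (LinearMap.fst ℤ _ _ ∘ₗ p)
  obtain ⟨C32, h32⟩ := H.lin_lip (S := S) (LinearMap.snd ℤ _ _ ∘ₗ p)
  obtain ⟨Ck, hk⟩ := H.lin_lip (S := S) κ
  obtain ⟨CU, hU⟩ := H.upper (S := S)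
  obtain ⟨Cψ, hψ⟩ := hom_lip hgen ψ.toMonoidHom
  choose y hy using fun i => hM _ (hf i)
  choose F hF using fun i => H.surj (f i)
  obtain ⟨C6, h6⟩ := prod_lift hgen (fun g => (π g, π (ψ g)))
    (fun g h => by rw [map_mul, H.add, H.add]; rfl) y
  let Q : (Fin ρ → Fin D) → G := fun m => PP ρ (fun i => F i ^ ((m i : ℕ) : ℤ))
  obtain ⟨CQ, hQ⟩ := exists_unif (P := fun m C => InB S C (Q m)) (fun i n m h h' => h'.mono h)
    (fun i => InB.ex hgen (Q i))
  have hπQ : ∀ m, π (Q m) = ∑ i, ((m i : ℕ) : ℤ) • f i := by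
    intro m
    simp only [Q, H.pi_PP, H.pi_zpow, hF]
  have hpf : ∀ i, p (f i) = 0 := by
    intro i
    have := hpM _ (hf i)
    rw [map_nsmul, ← natCast_zsmul] at this
    exact (smul_eq_zero.1 this).resolve_left (by exact_mod_cast (by omega : D ≠ 0))
  set C3 := C31 + C32
  set Cx := C4 * C3
  set Cq := Ck * (Cx + 1)
  set Cw := C6 * Cq
  set K := Cx + CQ + (Cw + 1 + Cψ * Cw)
  refine ⟨CU * K ^ 2, D ^ ρ, fun n hn u => ?_⟩
  by_cases hu : ∃ g, InB S n g ∧ p (π g) = u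
  swap
  · exact ⟨∅, by simp, by simp, fun g hg hg' => absurd ⟨g, hg, hg'⟩ hu⟩
  obtain ⟨g0, hg0, hg0u⟩ := hu
  have hu1 : u.1 ∈ box r (C3 * n) := by
    rw [← hg0u]
    exact box_mono r (Nat.mul_le_mul_right _ (by omega)) (h31 n g0 hg0)
  have hu2 : u.2 ∈ box t (C3 * n) := by
    rw [← hg0u]
    exact box_mono t (Nat.mul_le_mul_right _ (by omega)) (h32 n g0 hg0)
  obtain ⟨x, hxu, hx⟩ := h4 (C3 * n) u hu1 hu2
  rw [← mul_assoc] at hx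
  refine ⟨Finset.univ.image (fun m => x * Q m), ?_, ?_, ?_⟩
  · exact Finset.card_image_le.trans (by simp)
  · intro w hw
    obtain ⟨m, -, rfl⟩ := Finset.mem_image.1 hw
    rw [H.add, map_add, hxu, hπQ, map_sum]
    simp [hpf]
  · intro g hg hgu
    have hxg : InB S ((Cx + 1) * n) (x⁻¹ * g) := (hx.inv.mul hg).mono (by rw [add_mul, one_mul])
    have hp0 : p (π (x⁻¹ * g)) = 0 := by
      rw [H.add, H.pi_inv, map_add, map_neg, hgu, hxu, neg_add_cancel]
    have hka := hκ _ hp0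
    have hkb := hk _ _ hxg
    rw [mem_box] at hkb
    set k := κ (π (x⁻¹ * g)) with hkd
    have hDz : (0 : ℤ) < D := by exact_mod_cast hD
    obtain ⟨w, hw, ew⟩ := h6 (Cq * n) (fun i => k i / D) (by
      intro i
      refine (Int.abs_ediv_le_abs _ _).trans ((hkb i).trans ?_)
      rw [← mul_assoc])
    rw [← mul_assoc] at hw
    have hwψ : InB S (Cψ * (Cw * n)) (ψ w) := hψ _ _ hw
    let m : Fin ρ → Fin D := fun i => ⟨(k i % D).toNat, by
      have h1 := Int.emod_lt_of_pos (k i) hDz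
      have h2 := Int.emod_nonneg (k i) hDz.ne'
      omega⟩
    have hm : ∀ i, (((m i : ℕ)) : ℤ) = k i % D := fun i => Int.toNat_of_nonneg (Int.emod_nonneg _ hDz.ne')
    have ew1 : π w = ∑ i, (k i / D) • π (y i) := by
      have := congrArg Prod.fst ew
      rw [Prod.fst_sum] at this
      exact this
    have ew2 : π (ψ w) = ∑ i, (k i / D) • π (ψ (y i)) := by
      have := congrArg Prod.snd ew
      rw [Prod.snd_sum] at this
      exact this
    have hπ : π (w⁻¹ * g * ψ w) = π (x * Q m) := by
      have e1 : π w - π (ψ w) = ∑ i, (k i / D * D) • f i := by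
        rw [ew1, ew2, ← Finset.sum_sub_distrib]
        refine Finset.sum_congr rfl fun i _ => ?_
        rw [← smul_sub, ← hy, ← natCast_zsmul, smul_smul]
      have e2 : π g = π x + ∑ i, k i • f i := by
        rw [← hka, H.add, H.pi_inv]; abel
      have e3 : ∑ i, k i • f i = ∑ i, (k i / D * D) • f i + ∑ i, (k i % D) • f i := by
        rw [← Finset.sum_add_distrib]
        refine Finset.sum_congr rfl fun i _ => ?_
        rw [← add_smul, mul_comm, Int.mul_ediv_add_emod]
      rw [H.add, H.add, H.pi_inv, H.add, hπQ]
      simp only [hm]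
      rw [e2, e3, ← e1]; abel
    obtain ⟨j, hj⟩ := H.eq_mul hπ
    refine ⟨x * Q m, Finset.mem_image.2 ⟨m, Finset.mem_univ _, rfl⟩, j, ?_, w⁻¹, ?_⟩
    · have hz : z ^ j = (x * Q m)⁻¹ * (w⁻¹ * g * ψ w) := by rw [hj, inv_mul_cancel_left]
      have hb : InB S (K * n) (z ^ j) := by
        rw [hz]
        refine ((hx.mul (hQ m)).inv.mul ((hw.inv.mul hg).mul hwψ)).mono ?_
        have : CQ ≤ CQ * n := Nat.le_mul_of_pos_right _ hn
        change Cx * n + CQ + (Cw * n + n + Cψ * (Cw * n)) ≤ (Cx + CQ + (Cw + 1 + Cψ * Cw)) * n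
        calc Cx * n + CQ + (Cw * n + n + Cψ * (Cw * n))
            ≤ Cx * n + CQ * n + (Cw * n + n + Cψ * (Cw * n)) := by omega
          _ = _ := by ring
      have := hU _ _ hb
      push_cast at this ⊢
      linarith
    · rw [map_inv, inv_inv, hj]

theorem assemble (H : HS π z) (ψ : G ≃* G) {S : Finset G} (hgen : Subgroup.closure (S : Set G) = ⊤)
    (hnc : ∃ x y : G, x * y ≠ y * x)
    [Module.Free ℤ A] [Module.Finite ℤ A] (M : Submodule ℤ A)
    (hM : ∀ m, m ∈ M ↔ ∃ g, m = π g - π (ψ g)) {r t ρ : ℕ}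
    (p : A →ₗ[ℤ] (Fin r → ℤ) × (Fin t → ℤ)) (D : ℕ) (f : Fin ρ → A) (κ : A →ₗ[ℤ] (Fin ρ → ℤ))
    (hp : Function.Surjective p) (hpM : ∀ m ∈ M, p m = 0) (hD : 1 ≤ D)
    (hκ : ∀ a, p a = 0 → a = ∑ i, κ a i • f i) (hf : ∀ i, D • f i ∈ M)
    (c : G → ℕ) (hc : ∀ x (i : ℤ), TwistedConj ψ x (x * z ^ i) ↔ (c x : ℤ) ∣ i)
    (c' : (Fin r → ℤ) → ℕ) (C0 : ℕ)
    (hB1 : ∀ x, c x ≤ C0 * c' (p (π x)).1) (hB2 : ∀ x, c' (p (π x)).1 ≤ C0 * c x)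
    (h7 : ∀ n : ℕ, 1 ≤ n → ∀ s ∈ box r n, c' s ≤ C0 * n) :
    ∃ D : ℕ, 1 ≤ D ∧ ∀ n, 1 ≤ n →
      twistedGrowth ψ S n ≤ D * (Fsum c' (D * n) * (2 * (D * n) + 1) ^ t) ∧
      Fsum c' n * (2 * n + 1) ^ t ≤ D * twistedGrowth ψ S (D * n) := by
  obtain ⟨C4, h4⟩ := H.lift_box hgen p hp
  obtain ⟨C31, h31⟩ := H.lin_lip (S := S) (LinearMap.fst ℤ _ _ ∘ₗ p)
  obtain ⟨C32, h32⟩ := H.lin_lip (S := S) (LinearMap.snd ℤ _ _ ∘ₗ p)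
  obtain ⟨C5, h5⟩ := H.zball hgen hnc
  obtain ⟨C6, T, h6⟩ := H.reps ψ hgen M (fun m hm => (hM m).1 hm) p D f κ hp hpM hD hκ hf
  set C := C0 + C4 + C31 + C32 + C5 + C6 + 1
  refine counting ψ hgen z (fun g => p (π g)) c c' C T (by omega) (H.c_h1 ψ hc) ?_ ?_ ?_ ?_ ?_ ?_ ?_ ?_ ?_
  · rintro x _ ⟨g, rfl⟩
    have : π (g * x * (ψ g)⁻¹) = π x + (π g - π (ψ g)) := by
      rw [H.add, H.add, H.pi_inv]; abel
    rw [this, map_add, hpM _ ((hM _).2 ⟨g, rfl⟩), add_zero]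
  · intro x i; simp only [H.pi_mul_z]
  · exact fun x => (hB1 x).trans (Nat.mul_le_mul_right _ (by omega))
  · exact fun x => (hB2 x).trans (Nat.mul_le_mul_right _ (by omega))
  · exact fun n g hg => ⟨box_mono r (Nat.mul_le_mul_right _ (by omega)) (h31 n g hg),
      box_mono t (Nat.mul_le_mul_right _ (by omega)) (h32 n g hg)⟩
  · intro n u h1 h2
    obtain ⟨x, hx, hx'⟩ := h4 n u h1 h2
    exact ⟨x, hx, hx'.mono (Nat.mul_le_mul_right _ (by omega))⟩
  · exact fun n i hn hi => (h5 n i hn hi).mono (Nat.mul_le_mul_right _ (by omega))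
  · intro n hn u
    obtain ⟨R, hR1, hR2, hR3⟩ := h6 n hn u
    refine ⟨R, hR1, hR2, fun g hg hgu => ?_⟩
    obtain ⟨x, hx, j, hj, ht⟩ := hR3 g hg hgu
    exact ⟨x, hx, j, hj.trans (mul_le_mul_of_nonneg_right (by exact_mod_cast (by omega)) (by positivity)), ht⟩
  · exact fun n hn s hs => (h7 n hn s hs).trans (Nat.mul_le_mul_right _ (by omega))

theorem main (H : HS π z) (ψ : G ≃* G) {S : Finset G} (hgen : Subgroup.closure (S : Set G) = ⊤)
    (hnc : ∃ x y : G, x * y ≠ y * x)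
    [Module.Free ℤ A] [Module.Finite ℤ A] (M : Submodule ℤ A)
    (hM : ∀ m, m ∈ M ↔ ∃ g, m = π g - π (ψ g)) (hψ : ψ z = z ∨ ψ z = z⁻¹) :
    ∃ d : ℕ → ℝ, IsD d ∧ GrowthEquiv (fun n => (twistedGrowth ψ S n : ℝ))
      (fun n => (n : ℝ) ^ (Module.finrank ℤ A - Module.finrank ℤ M) * d n) := by
  obtain ⟨c, hc⟩ := H.c_ex ψ
  rcases hψ with hψ | hψ
  · obtain ⟨l, τ, v, hv1, hv2, hv3⟩ := H.gens ψ hψ hc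
    obtain ⟨r, t, ρ, p, B, D, f, κ, hp, hrk, hpM, hB, hvB, hD, hκ, hf⟩ := lattice M v (by
      intro m hm
      obtain ⟨g, rfl⟩ := (hM m).1 hm
      rw [map_sub, hv1, sub_self])
    rw [show Module.finrank ℤ A - Module.finrank ℤ M = r + t by omega]
    obtain ⟨m, B', hm, hB', hτ⟩ := lat_inv B hB
    rcases hτ τ with ⟨s0, hs0⟩ | ⟨F, hF1, hF2⟩
    · refine growth_combine ψ hgen (gaff s0 m) (Or.inr ⟨s0, m, hm, rfl⟩) ?_
      have hsum : ∀ x, m • (τ + v (π x)) = B (fun i => s0 i + m * (p (π x)).1 i) := by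
        intro x
        rw [smul_add, hs0, hvB, ← map_nsmul, ← map_add]
        rfl
      have hd1 : ∀ x, c x ∣ m * gaff s0 m (p (π x)).1 := by
        intro x
        obtain ⟨y, hy⟩ := vec_dvd (x := τ + v (π x)) (hv2 x)
        have e1 := hsum x
        rw [hy] at e1
        have e2 := congrArg B' e1
        rw [hB', smul_comm, map_smul] at e2
        rw [gaff, ← gv_smul]
        apply dvd_gv
        intro i
        rw [← e2]
        exact ⟨_, rfl⟩
      have hd2 : ∀ x, gaff s0 m (p (π x)).1 ∣ m * c x := by
        intro x
        obtain ⟨y, hy⟩ := vec_dvd (gv_dvd (fun i => s0 i + m * (p (π x)).1 i))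
        have e1 := hsum x
        rw [hy, map_smul] at e1
        have := hv3 x (gaff s0 m (p (π x)).1) m (fun i => by
          have e2 := congrFun e1 i
          refine ⟨B y i, ?_⟩
          simpa [gaff] using e2)
        exact_mod_cast this
      refine H.assemble ψ hgen hnc M hM p D f κ hp hpM hD hκ hf c hc _ (m + (m + kk s0)) ?_ ?_ ?_
      · exact fun x => le_of_dvds hm (by omega) (hd1 x) (hd2 x)
      · exact fun x => le_of_dvds hm (by omega) (hd2 x) (hd1 x)
      · intro n hn s hs
        exact (gaff_le s0 m n hn hs).trans (Nat.mul_le_mul_right _ (by omega))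
    · refine growth_combine ψ hgen (fun _ => 1) (Or.inl rfl) ?_
      have hd : ∀ x, (c x : ℤ) ∣ F τ := by
        intro x
        obtain ⟨y, hy⟩ := vec_dvd (x := τ + v (π x)) (hv2 x)
        have e1 := congrArg F hy
        rw [map_add, hvB, hF1, add_zero, map_smul] at e1
        exact ⟨_, e1⟩
      refine H.assemble ψ hgen hnc M hM p D f κ hp hpM hD hκ hf c hc _ ((F τ).natAbs + 1) ?_ ?_ ?_
      · intro x
        have := Nat.le_of_dvd (by omega) (Int.natCast_dvd.1 (hd x))
        omega
      · intro x
        have : c x ≠ 0 := fun h => hF2 (by simpa [h] using hd x)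
        have : 1 ≤ c x := by omega
        exact Nat.mul_pos (by omega) this
      · intro n hn s hs
        exact Nat.mul_pos (by omega) hn
  · obtain ⟨r, t, ρ, p, B, D, f, κ, hp, hrk, hpM, hB, hvB, hD, hκ, hf⟩ := lattice M (l := 0) 0 (by simp)
    rw [show Module.finrank ℤ A - Module.finrank ℤ M = r + t by omega]
    refine growth_combine ψ hgen (fun _ => 1) (Or.inl rfl) ?_
    have hd : ∀ x, c x ∣ 2 := by
      intro x
      have : (c x : ℤ) ∣ 2 := (hc x 2).1 ⟨z, by
        rw [hψ, inv_inv, ← H.cen, mul_assoc, zpow_ofNat, pow_two]⟩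
      exact_mod_cast this
    refine H.assemble ψ hgen hnc M hM p D f κ hp hpM hD hκ hf c hc _ 2 ?_ ?_ ?_
    · intro x
      have := Nat.le_of_dvd (by omega) (hd x)
      omega
    · intro x
      have := Nat.pos_of_dvd_of_pos (hd x) (by omega)
      omega
    · intro n hn s hs
      nlinarith

end HS

end

section
open scoped commutatorElement

theorem final_aux
    (G : Type*) [Group G] (S : Finset G)
    (hgen : Subgroup.closure (S : Set G) = ⊤)
    (htf : ∀ (g : G) (n : ℕ), 0 < n → g ^ n = 1 → g = 1)
    (h2step : commutator G ≤ Subgroup.center G)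
    (G2 : Subgroup G)
    (hG2 : ∀ g : G, g ∈ G2 ↔ ∃ n : ℕ, 0 < n ∧ g ^ n ∈ commutator G)
    (hcyc : IsCyclic G2) (hinf : Infinite G2)
    (ψ : G ≃* G) :
    ∃ d : ℕ → ℝ, IsD d ∧
      GrowthEquiv (fun n => (twistedGrowth ψ S n : ℝ))
        (fun n =>
          (n : ℝ) ^ (Module.finrank ℤ (Additive (Abelianization G)) -
            Module.finrank ℤ
              (Additive
                ↥(MonoidHom.id (Abelianization G) / Abelianization.map ψ.toMonoidHom).range)) *
          d n) := by
  classical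
  have hGfg : Group.FG G := ⟨⟨S, hgen⟩⟩
  have hAbfg : Group.FG (Abelianization G) := inferInstanceAs (Group.FG (G ⧸ commutator G))
  have hAfin : Module.Finite ℤ (Additive (Abelianization G)) :=
    Module.Finite.iff_addGroup_fg.2 (GroupFG.iff_add_fg.1 hAbfg)
  let T := Submodule.torsion ℤ (Additive (Abelianization G))
  let A := Additive (Abelianization G) ⧸ T
  have hAtf : Module.IsTorsionFree ℤ A := inferInstance
  have hAfin' : Module.Finite ℤ A := inferInstance
  have hAfree : Module.Free ℤ A := Module.free_of_finite_type_torsion_free'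
  let π : G → A := fun g => T.mkQ (Additive.ofMul (Abelianization.of g))
  have hT : ∀ a : Additive (Abelianization G), T.mkQ a = 0 ↔ ∃ n : ℕ, n ≠ 0 ∧ n • a = 0 := by
    intro a
    rw [Submodule.mkQ_apply, Submodule.Quotient.mk_eq_zero, Submodule.mem_torsion_iff]
    constructor
    · rintro ⟨n, hn⟩
      refine ⟨(n : ℤ).natAbs, Int.natAbs_ne_zero.2 (nonZeroDivisors.coe_ne_zero n), ?_⟩
      have h1 : (n : ℤ) • a = 0 := hn
      rcases Int.natAbs_eq (n : ℤ) with h | h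
      · rw [h] at h1
        rwa [natCast_zsmul] at h1
      · rw [h, neg_smul, natCast_zsmul] at h1
        exact neg_eq_zero.1 h1
    · rintro ⟨n, hn, h⟩
      refine ⟨⟨(n : ℤ), by simpa using hn⟩, ?_⟩
      change (n : ℤ) • a = 0
      rw [natCast_zsmul, h]
  have hπ2 : ∀ g, π g = 0 ↔ g ∈ G2 := by
    intro g
    rw [hG2]
    refine (hT _).trans (exists_congr fun n => and_congr Nat.pos_iff_ne_zero.symm ?_)
    rw [← ofMul_pow, ← map_pow, ofMul_eq_zero, ← MonoidHom.mem_ker, Abelianization.ker_of]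
  have hcomm : ∀ g h : G, ⁅g, h⁆ ∈ commutator G := fun g h =>
    Subgroup.commutator_mem_commutator (Subgroup.mem_top g) (Subgroup.mem_top h)
  have hcenter : ∀ w ∈ G2, ∀ g, g * w = w * g := by
    intro w hw g
    obtain ⟨n, hn, h⟩ := (hG2 w).1 hw
    have hc := Subgroup.mem_center_iff.1 (h2step h) g
    have hcc : Commute g ⁅g, w⁆ := Subgroup.mem_center_iff.1 (h2step (hcomm g w)) g
    have hcw : Commute w ⁅g, w⁆ := Subgroup.mem_center_iff.1 (h2step (hcomm g w)) w
    have e1 : g * w * g⁻¹ = ⁅g, w⁆ * w := by simp [commutatorElement_def, mul_assoc]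
    have e2 : (g * w * g⁻¹) ^ n = w ^ n := by
      rw [conj_pow, hc, mul_inv_cancel_right]
    rw [e1, hcw.symm.mul_pow] at e2
    have e3 := htf _ n hn (mul_eq_right.1 e2)
    rwa [commutatorElement_eq_one_iff_mul_comm] at e3
  obtain ⟨⟨z, hz⟩, hzg⟩ := hcyc.exists_generator
  have hzg' : ∀ g, g ∈ G2 ↔ ∃ i : ℤ, g = z ^ i := by
    intro g
    constructor
    · intro hg
      obtain ⟨i, hi⟩ := Subgroup.mem_zpowers_iff.1 (hzg ⟨g, hg⟩)
      exact ⟨i, by simpa using (congrArg Subtype.val hi).symm⟩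
    · rintro ⟨i, rfl⟩; exact G2.zpow_mem hz i
  have hz1 : z ≠ 1 := by
    rintro rfl
    have : Subsingleton G2 := ⟨fun a b => by
      obtain ⟨i, hi⟩ := (hzg' a).1 a.2
      obtain ⟨j, hj⟩ := (hzg' b).1 b.2
      exact Subtype.ext (by rw [hi, hj]; simp)⟩
    exact not_finite G2
  have hzinf : ∀ i : ℤ, z ^ i = 1 → i = 0 := by
    intro i hi
    by_contra h0
    refine hz1 (htf z i.natAbs (by omega) ?_)
    rcases Int.natAbs_eq i with h | h
    · rw [h] at hi; rwa [zpow_natCast] at hi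
    · rw [h, zpow_neg, zpow_natCast, inv_eq_one] at hi; exact hi
  have H : HS π z :=
    { add := fun g h => by simp only [π, map_mul, ofMul_mul, map_add]
      surj := by
        intro a
        obtain ⟨b, rfl⟩ := T.mkQ_surjective a
        obtain ⟨g, hg⟩ := QuotientGroup.mk_surjective (s := commutator G) (Additive.toMul b)
        exact ⟨g, congrArg T.mkQ (congrArg Additive.ofMul hg)⟩
      ker := fun g => (hπ2 g).trans (hzg' g)
      cen := hcenter z hz
      inf := hzinf }
  have hnc : ∃ x y : G, x * y ≠ y * x := by
    by_contra! hcon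
    obtain ⟨n, hn, h⟩ := (hG2 z).1 hz
    have hbot : commutator G ≤ ⊥ := by
      rw [commutator_def, Subgroup.commutator_le]
      intro x _ y _
      rw [Subgroup.mem_bot, commutatorElement_eq_one_iff_mul_comm]
      exact hcon x y
    exact hz1 (htf z n hn (Subgroup.mem_bot.1 (hbot h)))
  have hcmap : ∀ (φ : G ≃* G) g, g ∈ commutator G → φ g ∈ commutator G := by
    intro φ g hg
    have h1 : (commutator G).map φ.toMonoidHom ≤ commutator G := by
      rw [commutator_def, Subgroup.map_commutator]
      exact Subgroup.commutator_mono le_top le_top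
    exact h1 ⟨g, hg, rfl⟩
  have hGmap : ∀ (φ : G ≃* G) g, g ∈ G2 → φ g ∈ G2 := by
    intro φ g hg
    obtain ⟨n, hn, h⟩ := (hG2 g).1 hg
    exact (hG2 _).2 ⟨n, hn, by rw [← map_pow]; exact hcmap φ _ h⟩
  have hψz : ψ z = z ∨ ψ z = z⁻¹ := by
    obtain ⟨i, hi⟩ := (hzg' _).1 (hGmap ψ z hz)
    obtain ⟨j, hj⟩ := (hzg' _).1 (hGmap ψ.symm z hz)
    have e1 : z ^ (i * j) = z ^ (1 : ℤ) := by
      rw [zpow_mul, ← hi, ← map_zpow, ← hj, MulEquiv.apply_symm_apply, zpow_one]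
    have e2 := H.zinj e1
    rcases Int.eq_one_or_neg_one_of_mul_eq_one e2 with h | h
    · left; rw [hi, h, zpow_one]
    · right; rw [hi, h, zpow_neg_one]
  set ff := (MonoidHom.id (Abelianization G) / Abelianization.map ψ.toMonoidHom) with hff
  have hffg : ∀ g : G, ff (Abelianization.of g) = Abelianization.of g / Abelianization.of (ψ g) := by
    intro g; rfl
  have hRfg : Group.FG ff.range := inferInstance
  have hRfin : Module.Finite ℤ (Additive ff.range) :=
    Module.Finite.iff_addGroup_fg.2 (GroupFG.iff_add_fg.1 hRfg)
  let q : Additive ff.range →ₗ[ℤ] Additive (Abelianization G) :=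
    (MonoidHom.toAdditive ff.range.subtype).toIntLinearMap
  have hq : Function.Injective q := Subtype.val_injective
  let M : Submodule ℤ A := LinearMap.range (T.mkQ ∘ₗ q)
  have hM : ∀ m, m ∈ M ↔ ∃ g, m = π g - π (ψ g) := by
    intro m
    have key : ∀ g : G, T.mkQ (Additive.ofMul (ff (Abelianization.of g))) = π g - π (ψ g) := by
      intro g
      rw [hffg, ofMul_div, map_sub]
    constructor
    · rintro ⟨⟨x, y, rfl⟩, rfl⟩
      obtain ⟨g, rfl⟩ := QuotientGroup.mk_surjective (s := commutator G) y
      exact ⟨g, key g⟩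
    · rintro ⟨g, rfl⟩
      exact ⟨Additive.ofMul ⟨ff (Abelianization.of g), _, rfl⟩, key g⟩
  have r1 : Module.finrank ℤ A = Module.finrank ℤ (Additive (Abelianization G)) := by
    rw [← finrank_map_of_torsion T.mkQ (fun a ha => (hT a).1 ha), Submodule.range_mkQ, finrank_top]
  have r2 : Module.finrank ℤ M = Module.finrank ℤ (Additive ff.range) := by
    refine finrank_map_of_torsion (T.mkQ ∘ₗ q) (fun a ha => ?_)
    obtain ⟨n, hn, h⟩ := (hT (q a)).1 ha
    exact ⟨n, hn, hq (by rw [map_nsmul, h, map_zero])⟩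
  have := H.main ψ hgen hnc M hM hψz
  rwa [r1, r2] at this

end

/-- **Theorem A.** Let `G` be a generalised Heisenberg group (finitely generated, torsion-free,
2-step nilpotent, with infinite cyclic isolator `G2` of the derived subgroup), `S` a finite
generating set and `ψ` an automorphism of `G`, inducing `ψ̄` on the abelianization.  Then
`gr_{ψ,G}^S(n) ≃ n ^ (rank (G/[G,G]) - rank (id - ψ̄)) * d n` with
`d ∈ {n ↦ n², n ↦ n, n ↦ ln n, n ↦ 1}`. -/
theorem twisted_growth_heisenberg
    (G : Type*) [Group G] (S : Finset G)
    (hgen : Subgroup.closure (S : Set G) = ⊤)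
    (htf : ∀ (g : G) (n : ℕ), 0 < n → g ^ n = 1 → g = 1)
    (h2step : commutator G ≤ Subgroup.center G)
    (G2 : Subgroup G) [G2.Normal]
    (hG2 : ∀ g : G, g ∈ G2 ↔ ∃ n : ℕ, 0 < n ∧ g ^ n ∈ commutator G)
    (hcyc : IsCyclic G2) (hinf : Infinite G2)
    (ψ : G ≃* G) :
    ∃ d : ℕ → ℝ,
      (d = (fun n : ℕ => (n : ℝ) ^ 2) ∨ d = (fun n : ℕ => (n : ℝ)) ∨
        d = (fun n : ℕ => Real.log n) ∨ d = (fun _ : ℕ => (1 : ℝ))) ∧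
      GrowthEquiv (fun n => (twistedGrowth ψ S n : ℝ))
        (fun n =>
          (n : ℝ) ^ (Module.finrank ℤ (Additive (Abelianization G)) -
            Module.finrank ℤ
              (Additive
                ↥(MonoidHom.id (Abelianization G) / Abelianization.map ψ.toMonoidHom).range)) *
          d n) := by
  exact final_aux G S hgen htf h2step G2 hG2 hcyc hinf ψ
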